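/- arXiv:2111.14280 — 4 statements merged into one kernel-verified Lean document; each statement's English description precedes it below -/
import Mathlib

section
/- Let K₁, K₂ be strictly convex bodies in ℂⁿ with n ≥ 3, with interior points p₁ ∈ int K₁ and p₂ ∈ int K₂. Suppose that for every complex hyperplane H through the origin, the section (H + p₁) ∩ K₁ is positively homothetic to (H + p₂) ∩ K₂. Then K₁ is positively homothetic to K₂. -/
def IsConvexBody {n : ℕ} (K : Set (EuclideanSpace ℂ (Fin n))) : Prop :=
  IsCompact K ∧ Convex ℝ K ∧ (interior K).Nonempty

/-- `B` is the image of `A` under a positive homothety (ratio `r > 0`). -/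
def IsPositivelyHomothetic {n : ℕ} (A B : Set (EuclideanSpace ℂ (Fin n))) : Prop :=
  ∃ (r : ℝ) (c : EuclideanSpace ℂ (Fin n)), 0 < r ∧ B = (fun x => r • x + c) '' A

open Topology in
theorem aux_step {V : Type*} [NormedAddCommGroup V] [NormedSpace ℝ V] {B : Set V} {m : V}
    (hm : m ∈ interior B) (v : V) : ∃ ε : ℝ, 0 < ε ∧ m + ε • v ∈ B := by
  have hc : Filter.Tendsto (fun t : ℝ => m + t • v) (𝓝[>] 0) (𝓝 m) := by
    have : Continuous (fun t : ℝ => m + t • v) := by fun_prop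
    have h := this.tendsto 0
    simp only [zero_smul, add_zero] at h
    exact h.mono_left nhdsWithin_le_nhds
  have h1 := hc.eventually (mem_interior_iff_mem_nhds.1 hm)
  obtain ⟨ε, h, h'⟩ := (h1.and self_mem_nhdsWithin).exists
  exact ⟨ε, h', h⟩

/-- There is a hyperplane through any two vectors when `n ≥ 3`. -/
theorem aux_hyper {n : ℕ} (hn : 3 ≤ n) (x z : EuclideanSpace ℂ (Fin n)) :
    ∃ H : Submodule ℂ (EuclideanSpace ℂ (Fin n)), Module.finrank ℂ H = n - 1 ∧ x ∈ H ∧ z ∈ H := by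
  have hW : Submodule.span ℂ ({x, z} : Set (EuclideanSpace ℂ (Fin n))) < ⊤ := by
    rw [lt_top_iff_ne_top]
    intro h
    have h1 : (Set.range ![x, z]).finrank ℂ ≤ Fintype.card (Fin 2) := finrank_range_le_card _
    have h2 : Set.range ![x, z] = {x, z} := by simp [Matrix.range_cons, Set.pair_comm]
    rw [h2, Set.finrank, h, finrank_top, finrank_euclideanSpace] at h1
    simp at h1
    omega
  obtain ⟨f, hf, hle⟩ := Submodule.exists_le_ker_of_lt_top _ hW
  refine ⟨LinearMap.ker f, ?_, hle (Submodule.subset_span (by simp)),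
    hle (Submodule.subset_span (by simp))⟩
  have := Module.Dual.finrank_ker_add_one_of_ne_zero (f := f) hf
  rw [finrank_euclideanSpace, Fintype.card_fin] at this
  omega

/-- Existence of a common direction with a common supporting functional. -/
theorem aux_touch {V : Type*} [NormedAddCommGroup V] [NormedSpace ℝ V] [Nontrivial V]
    {A B : Set V} (hA : IsCompact A) (hAc : Convex ℝ A) (hA0 : (0 : V) ∈ interior A)
    (hB : IsCompact B) (hB0 : (0 : V) ∈ interior B) :
    ∃ (x : V) (M : ℝ) (f : V →L[ℝ] ℝ), 0 < f x ∧ x ∈ A ∧ M • x ∈ B ∧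
      (∀ a ∈ A, f a ≤ f x) ∧ (∀ b ∈ B, f b ≤ f (M • x)) := by
  have hn : A ∈ nhds (0 : V) := mem_interior_iff_mem_nhds.1 hA0
  have hg : Continuous (gauge A) := continuous_gauge hAc hn
  obtain ⟨x₂, hx₂, hmax⟩ := hB.exists_isMaxOn ⟨0, interior_subset hB0⟩ hg.continuousOn
  set M := gauge A x₂ with hM
  have hMpos : 0 < M := by
    obtain ⟨v, hv⟩ := exists_ne (0 : V)
    obtain ⟨ε, hε, hb⟩ := aux_step hB0 v
    have h1 : 0 < gauge A (0 + ε • v) := by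
      rw [gauge_pos (absorbent_nhds_zero hn) (NormedSpace.isVonNBounded_of_isBounded ℝ hA.isBounded)]
      simp [hε.ne', hv]
    exact h1.trans_le (hmax hb)
  have hle : ∀ z, gauge A z ≤ 1 → z ∈ A := by
    intro z hz
    have := (gauge_le_one_iff_mem_closure hAc hn).1 hz
    rwa [hA.isClosed.closure_eq] at this
  have hsc : ∀ b ∈ B, M⁻¹ • b ∈ A := by
    intro b hb
    apply hle
    rw [gauge_smul_of_nonneg (by positivity), smul_eq_mul, inv_mul_le_one₀ hMpos]
    exact hmax hb
  have hx1 : M⁻¹ • x₂ ∉ interior A := by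
    rw [← gauge_lt_one_iff_mem_interior hAc hn, gauge_smul_of_nonneg (by positivity), smul_eq_mul,
      ← hM, inv_mul_cancel₀ hMpos.ne']
    exact lt_irrefl _
  obtain ⟨f, hf⟩ := geometric_hahn_banach_open_point hAc.interior isOpen_interior hx1
  have hfA : ∀ a ∈ A, f a ≤ f (M⁻¹ • x₂) := by
    intro a ha
    have h1 : a ∈ closure (interior A) := by
      rw [hAc.closure_interior_eq_closure_of_nonempty_interior ⟨0, hA0⟩]
      exact subset_closure ha
    exact closure_minimal (fun z hz => (hf z hz).le) (isClosed_le f.continuous continuous_const) h1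
  refine ⟨M⁻¹ • x₂, M, f, by simpa using hf 0 hA0, hsc _ hx₂, ?_, hfA, ?_⟩
  · rwa [smul_inv_smul₀ hMpos.ne']
  · intro b hb
    have := hfA _ (hsc b hb)
    rw [smul_inv_smul₀ hMpos.ne']
    simp only [map_smul, smul_eq_mul] at this
    exact le_of_mul_le_mul_left this (by positivity)

/-- A strictly convex set has a unique maximizer. -/
theorem aux_unique {V : Type*} [NormedAddCommGroup V] [NormedSpace ℝ V]
    {B : Set V} (hB : StrictConvex ℝ B) (f : V →L[ℝ] ℝ) (x u v : V) (hx : 0 < f x)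
    (hu : u ∈ B) (hv : v ∈ B) (hm : ∀ b ∈ B, f b ≤ f v) (huv : f v ≤ f u) : u = v := by
  by_contra hne
  have h := hB hu hv hne (a := 1 / 2) (b := 1 / 2) (by norm_num) (by norm_num) (by norm_num)
  obtain ⟨ε, hε, hb⟩ := aux_step h x
  have := hm _ hb
  simp only [map_add, map_smul, smul_eq_mul] at this
  have := mul_pos hε hx
  linarith

theorem stmt6 {n : ℕ} (hn : 3 ≤ n)
    (K₁ K₂ : Set (EuclideanSpace ℂ (Fin n)))
    (hK₁ : IsConvexBody K₁) (hK₂ : IsConvexBody K₂)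
    (hs₁ : StrictConvex ℝ K₁) (hs₂ : StrictConvex ℝ K₂)
    (p₁ p₂ : EuclideanSpace ℂ (Fin n))
    (hp₁ : p₁ ∈ interior K₁) (hp₂ : p₂ ∈ interior K₂)
    (hsec : ∀ H : Submodule ℂ (EuclideanSpace ℂ (Fin n)),
      Module.finrank ℂ H = n - 1 →
      IsPositivelyHomothetic (((· + p₁) '' (H : Set (EuclideanSpace ℂ (Fin n)))) ∩ K₁)
        (((· + p₂) '' (H : Set (EuclideanSpace ℂ (Fin n)))) ∩ K₂)) :
    IsPositivelyHomothetic K₁ K₂ := by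
  obtain ⟨hc₁, hv₁, -⟩ := hK₁
  obtain ⟨hc₂, hv₂, -⟩ := hK₂
  haveI : Nonempty (Fin n) := ⟨⟨0, by omega⟩⟩
  set A : Set (EuclideanSpace ℂ (Fin n)) := (Homeomorph.addRight p₁) ⁻¹' K₁ with hA
  set B : Set (EuclideanSpace ℂ (Fin n)) := (Homeomorph.addRight p₂) ⁻¹' K₂ with hB
  have memA : ∀ z, z ∈ A ↔ z + p₁ ∈ K₁ := fun z => Iff.rfl
  have memB : ∀ z, z ∈ B ↔ z + p₂ ∈ K₂ := fun z => Iff.rfl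
  have hAk : IsCompact A := (Homeomorph.isCompact_preimage _).2 hc₁
  have hBk : IsCompact B := (Homeomorph.isCompact_preimage _).2 hc₂
  have hA0 : (0 : EuclideanSpace ℂ (Fin n)) ∈ interior A := by
    rw [hA, ← Homeomorph.preimage_interior]; simpa using hp₁
  have hB0 : (0 : EuclideanSpace ℂ (Fin n)) ∈ interior B := by
    rw [hB, ← Homeomorph.preimage_interior]; simpa using hp₂
  have hAc : Convex ℝ A := hv₁.translate_preimage_left p₁
  have hBs : StrictConvex ℝ B := hs₂.preimage_add_left p₂
  obtain ⟨x, M, f, hfx, hxA, hxB, hfA, hfB⟩ := aux_touch hAk hAc hA0 hBk hB0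
  have hx0 : x ≠ 0 := by rintro rfl; simp at hfx
  -- normal form of the section homotheties
  have key : ∀ H : Submodule ℂ (EuclideanSpace ℂ (Fin n)), Module.finrank ℂ H = n - 1 → x ∈ H →
      ∃ r : ℝ, 0 < r ∧ (∀ z ∈ H, z ∈ A → r • z + (M - r) • x ∈ B) ∧
        (∀ b ∈ H, b ∈ B → ∃ z ∈ H, z ∈ A ∧ b = r • z + (M - r) • x) := by
    intro H hH hxH
    obtain ⟨r, c, hr, he⟩ := hsec H hH
    have smulH : ∀ (t : ℝ) (z), z ∈ H → t • z ∈ H := fun t z hz => H.smul_of_tower_mem t hz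
    have fwd : ∀ z ∈ H, z ∈ A → r • z + (r • p₁ + c - p₂) ∈ B ∧ r • z + (r • p₁ + c - p₂) ∈ H := by
      intro z hz hzA
      have h1 : r • (z + p₁) + c ∈ ((· + p₂) '' (H : Set (EuclideanSpace ℂ (Fin n)))) ∩ K₂ := by
        rw [he]; exact ⟨z + p₁, ⟨⟨z, hz, rfl⟩, hzA⟩, rfl⟩
      obtain ⟨⟨w, hw, hw2⟩, h2⟩ := h1
      have h3 : r • z + (r • p₁ + c - p₂) = w := by
        have hw3 : w = r • (z + p₁) + c - p₂ := eq_sub_of_add_eq hw2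
        rw [hw3, smul_add]; abel
      rw [h3, memB]
      refine ⟨?_, hw⟩
      simp only at hw2
      rwa [hw2]
    have bwd : ∀ b ∈ H, b ∈ B → ∃ z ∈ H, z ∈ A ∧ b = r • z + (r • p₁ + c - p₂) := by
      intro b hb hbB
      have h1 : b + p₂ ∈ ((· + p₂) '' (H : Set (EuclideanSpace ℂ (Fin n)))) ∩ K₂ :=
        ⟨⟨b, hb, rfl⟩, hbB⟩
      rw [he] at h1
      obtain ⟨_, ⟨⟨z, hz, rfl⟩, h2⟩, h3⟩ := h1
      refine ⟨z, hz, h2, ?_⟩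
      simp only at h3
      have hw3 : b = r • (z + p₁) + c - p₂ := eq_sub_of_add_eq h3.symm
      rw [hw3, smul_add]; abel
    have hc : r • x + (r • p₁ + c - p₂) = M • x := by
      refine aux_unique hBs f x _ _ hfx (fwd x hxH hxA).1 hxB hfB ?_
      obtain ⟨w, hw, hwA, h⟩ := bwd _ (smulH M x hxH) hxB
      rw [h]
      simp only [map_add, map_smul, smul_eq_mul]
      have := mul_le_mul_of_nonneg_left (hfA w hwA) hr.le
      linarith
    have hc' : r • p₁ + c - p₂ = (M - r) • x := by
      rw [sub_smul, ← hc]; abel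
    rw [hc'] at fwd bwd
    exact ⟨r, hr, fun z hz hzA => (fwd z hz hzA).1, bwd⟩
  -- the ratio does not depend on the hyperplane
  have hS : IsCompact ((fun t : ℝ => t • x) ⁻¹' A) :=
    (isClosedEmbedding_smul_left hx0).isCompact_preimage hAk
  obtain ⟨a, haA, hamin⟩ := hS.exists_isLeast ⟨1, by simpa using hxA⟩
  have ha0 : a ≤ 0 := hamin (by simpa using interior_subset hA0)
  have le : ∀ H H' : Submodule ℂ (EuclideanSpace ℂ (Fin n)), x ∈ H → x ∈ H' → ∀ r r' : ℝ, 0 < r →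
      (∀ b ∈ H, b ∈ B → ∃ z ∈ H, z ∈ A ∧ b = r • z + (M - r) • x) →
      (∀ z ∈ H', z ∈ A → r' • z + (M - r') • x ∈ B) → r' ≤ r := by
    intro H H' hx hx' r r' hr bwd fwd
    have h1 := fwd (a • x) (H'.smul_of_tower_mem a hx') haA
    have h2 : r' • a • x + (M - r') • x = (r' * a + (M - r')) • x := by
      rw [smul_smul, add_smul]
    rw [h2] at h1
    obtain ⟨z, -, hzA, h⟩ := bwd _ (H.smul_of_tower_mem _ hx) h1
    have h3 : r • z = (r' * a + r - r') • x := by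
      have : r • z = (r' * a + (M - r')) • x - (M - r) • x := by rw [h]; abel
      rw [this, ← sub_smul]; congr 1; ring
    have h4 : z = (r⁻¹ * (r' * a + r - r')) • x := by
      rw [mul_smul, ← h3, inv_smul_smul₀ hr.ne']
    have h5 : a ≤ r⁻¹ * (r' * a + r - r') := hamin (by
      change _ • x ∈ A
      rwa [← h4])
    rw [inv_mul_eq_div, le_div_iff₀ hr] at h5
    nlinarith
  obtain ⟨H₀, hH₀, hx₀, -⟩ := aux_hyper hn x x
  obtain ⟨r, hr, fwd₀, bwd₀⟩ := key H₀ hH₀ hx₀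
  have key2 : ∀ H : Submodule ℂ (EuclideanSpace ℂ (Fin n)), Module.finrank ℂ H = n - 1 → x ∈ H →
      (∀ z ∈ H, z ∈ A → r • z + (M - r) • x ∈ B) ∧
        (∀ b ∈ H, b ∈ B → ∃ z ∈ H, z ∈ A ∧ b = r • z + (M - r) • x) := by
    intro H hH hxH
    obtain ⟨r', hr', fwd, bwd⟩ := key H hH hxH
    have : r' = r := le_antisymm (le H₀ H hx₀ hxH r r' hr bwd₀ fwd) (le H H₀ hxH hx₀ r' r hr' bwd fwd₀)
    subst this
    exact ⟨fwd, bwd⟩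
  refine ⟨r, (M - r) • x - r • p₁ + p₂, hr, ?_⟩
  ext y
  constructor
  · intro hy
    obtain ⟨H, hH, hxH, hyH⟩ := aux_hyper hn x (y - p₂)
    obtain ⟨z, -, hzA, h⟩ := (key2 H hH hxH).2 _ hyH (by rw [memB]; simpa using hy)
    refine ⟨z + p₁, hzA, ?_⟩
    have : y = r • z + (M - r) • x + p₂ := by rw [← h]; abel
    simp only
    rw [this, smul_add]; abel
  · rintro ⟨w, hw, rfl⟩
    obtain ⟨H, hH, hxH, hyH⟩ := aux_hyper hn x (w - p₁)
    have h := (key2 H hH hxH).1 _ hyH (by rw [memA]; simpa using hw)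
    rw [memB] at h
    convert h using 1
    simp only [smul_sub]; abel
end

section
/- Let K₁, K₂ be strictly convex bodies in ℂⁿ with n ≥ 3, with p₁ ∈ int K₁ and p₂ ∈ int K₂. If for every complex hyperplane H through the origin the section (H + p₁) ∩ K₁ is a translate of (H + p₂) ∩ K₂, then K₁ is a translate of K₂. -/
/-- `B` is a translate of `A`. -/
def IsTranslate {n : ℕ} (A B : Set (EuclideanSpace ℂ (Fin n))) : Prop :=
  ∃ c : EuclideanSpace ℂ (Fin n), B = (· + c) '' A

theorem exists_hyperplane {n : ℕ} (hn : 3 ≤ n) (x y : EuclideanSpace ℂ (Fin n)) :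
    ∃ H : Submodule ℂ (EuclideanSpace ℂ (Fin n)), Module.finrank ℂ H = n - 1 ∧ x ∈ H ∧ y ∈ H := by
  have hlt : Submodule.span ℂ {x, y} < ⊤ := by
    refine lt_top_iff_ne_top.2 fun h => ?_
    have h1 : Module.finrank ℂ (Submodule.span ℂ ({x, y} : Set (EuclideanSpace ℂ (Fin n)))) ≤ 2 := by
      classical
      have := finrank_span_le_card (R := ℂ) ({x, y} : Set (EuclideanSpace ℂ (Fin n)))
      refine this.trans ?_
      rw [Set.toFinset_insert, Set.toFinset_singleton]
      exact Finset.card_le_two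
    rw [h, finrank_top, finrank_euclideanSpace_fin] at h1
    omega
  obtain ⟨f, hf0, hf⟩ := Submodule.exists_le_ker_of_lt_top _ hlt
  refine ⟨LinearMap.ker f, ?_, hf (Submodule.subset_span (by simp)),
    hf (Submodule.subset_span (by simp))⟩
  have h1 := Module.Dual.finrank_ker_add_one_of_ne_zero hf0
  rw [finrank_euclideanSpace_fin] at h1
  omega

theorem core {E : Type*} [NormedAddCommGroup E] [NormedSpace ℝ E] [Nontrivial E] (A B : Set E)
    (hA : IsCompact A) (hB : IsCompact B) (hBs : StrictConvex ℝ B)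
    (hA0 : (0 : E) ∈ interior A) (hB0 : (0 : E) ∈ interior B) :
    ∃ (x e : E), ∀ (S : Set E) (d : E), x ∈ S → (∀ r : ℝ, r • x ∈ S) →
      (∀ z, z ∈ A ∩ S ↔ z - d ∈ B ∩ S) → d = e := by
  have hBn : B ∈ nhds (0 : E) := mem_interior_iff_mem_nhds.1 hB0
  have hcont : Continuous (gauge B) := continuous_gauge hBs.convex hBn
  obtain ⟨x, hxA, hx⟩ := hA.exists_isMaxOn ⟨0, interior_subset hA0⟩ hcont.continuousOn
  have habs : Absorbent ℝ B := absorbent_nhds_zero hBn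
  have hbd : Bornology.IsVonNBounded ℝ B := (NormedSpace.isVonNBounded_iff ℝ).2 hB.isBounded
  -- the maximum is positive
  have hpos : 0 < gauge B x := by
    obtain ⟨v, hv⟩ := exists_ne (0 : E)
    have hAn : A ∈ nhds (0 : E) := mem_interior_iff_mem_nhds.1 hA0
    have ht : Filter.Tendsto (fun t : ℝ => t • v) (nhdsWithin 0 (Set.Ioi 0)) (nhds 0) := by
      have : Continuous (fun t : ℝ => t • v) := by fun_prop
      have h := this.tendsto 0
      rw [zero_smul] at h
      exact h.mono_left nhdsWithin_le_nhds
    obtain ⟨t, htA, ht0⟩ := ((ht.eventually hAn).and self_mem_nhdsWithin).exists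
    have h1 : 0 < gauge B (t • v) :=
      (gauge_pos habs hbd).2 (smul_ne_zero (ne_of_gt ht0) hv)
    exact h1.trans_le (hx htA)
  set l := gauge B x with hl
  have hcl : ∀ z, gauge B z ≤ 1 → z ∈ B := fun z hz => by
    have := (gauge_le_one_iff_mem_closure hBs.convex hBn).1 hz
    rwa [hB.isClosed.closure_eq] at this
  have hg : ∀ z, gauge B (l⁻¹ • z) = l⁻¹ * gauge B z := fun z => by
    rw [gauge_smul_of_nonneg (inv_nonneg.2 hpos.le), smul_eq_mul]
  have hAB : ∀ a ∈ A, l⁻¹ • a ∈ B := fun a ha => by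
    apply hcl
    rw [hg, inv_mul_le_one₀ hpos]
    exact hx ha
  have hxB : l⁻¹ • x ∉ interior B := fun h => by
    have h1 := (gauge_lt_one_iff_mem_interior hBs.convex hBn).2 h
    rw [hg, ← hl, inv_mul_cancel₀ hpos.ne'] at h1
    exact lt_irrefl _ h1
  obtain ⟨f, hf⟩ := geometric_hahn_banach_open_point hBs.convex.interior isOpen_interior hxB
  have hfB : ∀ b ∈ B, f b ≤ f (l⁻¹ • x) := by
    intro b hb
    have h1 : B ⊆ closure (interior B) := by
      rw [hBs.convex.closure_interior_eq_closure_of_nonempty_interior ⟨0, hB0⟩]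
      exact subset_closure
    have h2 : closure (interior B) ⊆ {b | f b ≤ f (l⁻¹ • x)} :=
      closure_minimal (fun b hb => (hf b hb).le) (isClosed_le f.continuous continuous_const)
    exact h2 (h1 hb)
  have hfA : ∀ a ∈ A, f a ≤ f x := by
    intro a ha
    have := hfB _ (hAB a ha)
    rw [map_smul, map_smul, smul_eq_mul, smul_eq_mul] at this
    exact le_of_mul_le_mul_left this (inv_pos.2 hpos)
  refine ⟨x, x - l⁻¹ • x, fun S d hxS hrS hd => ?_⟩
  have h1 := ((hd x).1 ⟨hxA, hxS⟩).1
  have h2 : l⁻¹ • x + d ∈ A := ((hd _).2 (by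
    rw [add_sub_cancel_right]; exact ⟨hAB x hxA, hrS _⟩)).1
  have h3 := hfA _ h2
  have h4 := hfB _ h1
  rw [map_add] at h3
  have h5 : f (x - d) = f (l⁻¹ • x) := by
    rw [map_sub] at h4 ⊢
    linarith
  by_contra hne
  have hne' : x - d ≠ l⁻¹ • x := fun h => hne (by rw [← h]; abel)
  have h6 := hBs h1 (hAB x hxA) hne' (a := 1 / 2) (b := 1 / 2) (by norm_num) (by norm_num)
    (by norm_num)
  have h7 := hf _ h6
  rw [map_add, map_smul (f := f) (c := (1 / 2 : ℝ)) (x := x - d), map_smul (f := f) (c := (1 / 2 : ℝ)) (x := l⁻¹ • x), h5, smul_eq_mul] at h7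
  linarith

theorem stmt7 {n : ℕ} (hn : 3 ≤ n)
    (K₁ K₂ : Set (EuclideanSpace ℂ (Fin n)))
    (hK₁ : IsConvexBody K₁) (hK₂ : IsConvexBody K₂)
    (hs₁ : StrictConvex ℝ K₁) (hs₂ : StrictConvex ℝ K₂)
    (p₁ p₂ : EuclideanSpace ℂ (Fin n))
    (hp₁ : p₁ ∈ interior K₁) (hp₂ : p₂ ∈ interior K₂)
    (hsec : ∀ H : Submodule ℂ (EuclideanSpace ℂ (Fin n)),
      Module.finrank ℂ H = n - 1 →
      IsTranslate (((· + p₂) '' (H : Set (EuclideanSpace ℂ (Fin n)))) ∩ K₂)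
        (((· + p₁) '' (H : Set (EuclideanSpace ℂ (Fin n)))) ∩ K₁)) :
    IsTranslate K₂ K₁ := by
  haveI : Nonempty (Fin n) := ⟨⟨0, by omega⟩⟩
  have hi : ∀ (K : Set (EuclideanSpace ℂ (Fin n))) (p : EuclideanSpace ℂ (Fin n)),
      p ∈ interior K → (0 : EuclideanSpace ℂ (Fin n)) ∈ interior ((fun z => z + p) ⁻¹' K) := by
    intro K p hp
    have h := (Homeomorph.addRight p).preimage_interior K
    have h2 : (0 : EuclideanSpace ℂ (Fin n)) ∈ (Homeomorph.addRight p) ⁻¹' interior K := by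
      simpa using hp
    rw [h] at h2
    exact h2
  have hc : ∀ (K : Set (EuclideanSpace ℂ (Fin n))) (p : EuclideanSpace ℂ (Fin n)),
      IsCompact K → IsCompact ((fun z => z + p) ⁻¹' K) := fun K p hK =>
    (Homeomorph.addRight p).isCompact_preimage.2 hK
  obtain ⟨x, e, hxe⟩ := core ((fun z => z + p₁) ⁻¹' K₁) ((fun z => z + p₂) ⁻¹' K₂)
    (hc _ _ hK₁.1) (hc _ _ hK₂.1) (hs₂.preimage_add_left p₂) (hi _ _ hp₁) (hi _ _ hp₂)
  have key : ∀ y, (y + p₁ ∈ K₁ → y - e + p₂ ∈ K₂) ∧ (y + p₂ ∈ K₂ → y + e + p₁ ∈ K₁) := by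
    intro y
    obtain ⟨H, hH, hxH, hyH⟩ := exists_hyperplane hn x y
    obtain ⟨c, hcc⟩ := hsec H hH
    have hd : ∀ z, z ∈ ((fun z => z + p₁) ⁻¹' K₁) ∩ (H : Set (EuclideanSpace ℂ (Fin n))) ↔
        z - (c + p₂ - p₁) ∈ ((fun z => z + p₂) ⁻¹' K₂) ∩ (H : Set (EuclideanSpace ℂ (Fin n))) := by
      intro z
      have h := Set.ext_iff.1 hcc (z + p₁)
      simp only [Set.mem_inter_iff, Set.mem_image, Set.mem_preimage, SetLike.mem_coe,
        add_left_inj, exists_eq_right] at h ⊢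
      rw [and_comm, h]
      constructor
      · rintro ⟨w, ⟨⟨u, hu, rfl⟩, hw⟩, huz⟩
        have : z - (c + p₂ - p₁) = u := by
          rw [eq_sub_of_add_eq huz.symm]; abel
        rw [this]
        exact ⟨hw, hu⟩
      · rintro ⟨h1, h2⟩
        exact ⟨_, ⟨⟨_, h2, rfl⟩, h1⟩, by abel⟩
    have hde := hxe H _ hxH (fun r => by
      have := H.smul_mem (r : ℂ) hxH
      rwa [Complex.coe_smul] at this) hd
    rw [hde] at hd
    refine ⟨fun h => ((hd y).1 ⟨h, hyH⟩).1, fun h => ((hd (y + e)).2 ?_).1⟩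
    rw [add_sub_cancel_right]
    exact ⟨h, hyH⟩
  refine ⟨e + p₁ - p₂, ?_⟩
  ext z
  constructor
  · intro hz
    refine ⟨z - p₁ - e + p₂, (key (z - p₁)).1 (by rwa [sub_add_cancel]), ?_⟩
    dsimp only
    abel
  · rintro ⟨w, hw, rfl⟩
    have := (key (w - p₂)).2 (by rwa [sub_add_cancel])
    have h2 : w + (e + p₁ - p₂) = w - p₂ + e + p₁ := by abel
    dsimp only
    rwa [h2]
end

section
/- Let K be a convex body in ℂⁿ with n ≥ 3 and x₀ an interior point of K. If for every complex hyperplane H through x₀ the section H ∩ K is complex-symmetric, then K is complex-symmetric. -/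
open scoped Pointwise

def IsComplexSymmetric {n : ℕ} (A : Set (EuclideanSpace ℂ (Fin n))) : Prop :=
  ∃ c : EuclideanSpace ℂ (Fin n),
    ∀ ξ : ℂ, ‖ξ‖ = 1 → ξ • ((· - c) '' A) = (· - c) '' A

open Filter Topology

namespace CSym

/-- Two vectors in dimension at least three lie in a common complex hyperplane. -/
lemma exists_dual {n : ℕ} (hn : 3 ≤ n) (a v : EuclideanSpace ℂ (Fin n)) :
    ∃ ψ : EuclideanSpace ℂ (Fin n) →ₗ[ℂ] ℂ, ψ ≠ 0 ∧ ψ a = 0 ∧ ψ v = 0 := by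
  have hlt : Submodule.span ℂ ({a, v} : Set (EuclideanSpace ℂ (Fin n))) < ⊤ := by
    rw [lt_top_iff_ne_top]
    intro h
    have h1 := finrank_span_le_card (R := ℂ) ({a, v} : Set (EuclideanSpace ℂ (Fin n)))
    rw [h, finrank_top, finrank_euclideanSpace, Fintype.card_fin] at h1
    have h2 : ({a, v} : Set (EuclideanSpace ℂ (Fin n))).toFinset.card ≤ 2 := by
      rw [Set.toFinset_insert, Set.toFinset_singleton]
      exact Finset.card_le_two
    omega
  obtain ⟨f, hf, hle⟩ := Submodule.exists_le_ker_of_lt_top _ hlt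
  refine ⟨f, hf, ?_, ?_⟩
  · exact hle (Submodule.subset_span (by simp))
  · exact hle (Submodule.subset_span (by simp))

/-- Affine diameter through the origin with extremal ratio. -/
lemma exists_extremal {n : ℕ} (hn : 3 ≤ n) (K : Set (EuclideanSpace ℂ (Fin n)))
    (hc : IsCompact K) (hconv : Convex ℝ K) (h0 : (0 : EuclideanSpace ℂ (Fin n)) ∈ interior K) :
    ∃ (μ α : ℝ) (φ : EuclideanSpace ℂ (Fin n) →L[ℂ] ℂ), 0 < μ ∧ μ ≤ 1 ∧ 0 < α ∧
      (∀ x ∈ K, -(μ • x) ∈ K) ∧ (∀ x ∈ K, (φ x).re ≤ α) ∧ (∀ x ∈ K, -(μ * α) ≤ (φ x).re) ∧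
      ∃ a ∈ K, (φ a).re = α := by
  have hnh : K ∈ 𝓝 (0 : EuclideanSpace ℂ (Fin n)) := mem_interior_iff_mem_nhds.1 h0
  have hcl := hc.isClosed
  have hg := continuous_gauge hconv hnh
  obtain ⟨a, haK, hmax⟩ := hc.exists_isMaxOn ⟨0, interior_subset h0⟩
    (hg.comp continuous_neg).continuousOn
  set l := gauge K (-a) with hl
  have hmax' : ∀ x ∈ K, gauge K (-x) ≤ l := fun x hx => hmax hx
  have habs : Absorbent ℝ K := absorbent_nhds_zero hnh
  have hpos : ∀ x : EuclideanSpace ℂ (Fin n), x ≠ 0 → 0 < gauge K x := fun x hx =>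
    (gauge_pos habs (NormedSpace.isVonNBounded_of_isBounded ℝ hc.isBounded)).2 hx
  have hlpos : 0 < l := by
    let e : EuclideanSpace ℂ (Fin n) := EuclideanSpace.single ⟨0, by omega⟩ 1
    have he : e ≠ 0 := by
      intro h
      have : ‖e‖ = 1 := by simp [e]
      rw [h, norm_zero] at this
      norm_num at this
    have ht : Tendsto (fun t : ℝ => t • e) (𝓝[≠] 0) (𝓝 0) := by
      have : Tendsto (fun t : ℝ => t • e) (𝓝 0) (𝓝 ((0:ℝ) • e)) :=
        (continuous_id.smul continuous_const).tendsto 0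
      rw [zero_smul] at this
      exact this.mono_left nhdsWithin_le_nhds
    obtain ⟨t, ht1, ht2⟩ := ((ht.eventually hnh).and self_mem_nhdsWithin).exists
    have := hmax' _ ht1
    refine lt_of_lt_of_le (hpos _ ?_) this
    rw [neg_ne_zero]
    exact smul_ne_zero ht2 he
  have hN : ∀ x ∈ K, -(l⁻¹ • x) ∈ K := by
    intro x hx
    rw [← hcl.closure_eq, ← gauge_le_one_iff_mem_closure hconv hnh, ← smul_neg,
      gauge_smul_of_nonneg (by positivity), smul_eq_mul, inv_mul_le_iff₀ hlpos, mul_one]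
    exact hmax' x hx
  have hb : -(l⁻¹ • a) ∉ interior K := by
    rw [← gauge_lt_one_iff_mem_interior hconv hnh, ← smul_neg,
      gauge_smul_of_nonneg (by positivity), smul_eq_mul, ← hl, inv_mul_cancel₀ hlpos.ne']
    exact lt_irrefl _
  obtain ⟨g, hg'⟩ := RCLike.geometric_hahn_banach_open_point (𝕜 := ℂ) hconv.interior
    isOpen_interior hb
  have hre : ∀ (r : ℝ) (x : EuclideanSpace ℂ (Fin n)), g (r • x) = r * g x := by
    intro r x
    rw [← Complex.coe_smul r x, map_smul, smul_eq_mul]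
  have hga : (g (-(l⁻¹ • a))).re = - (l⁻¹ * (g a).re) := by
    rw [map_neg, hre, Complex.neg_re, Complex.re_ofReal_mul]
  have hle : ∀ x ∈ K, (g x).re ≤ - (l⁻¹ * (g a).re) := by
    intro x hx
    have hx' : x ∈ closure (interior K) := by
      rw [hconv.closure_interior_eq_closure_of_nonempty_interior ⟨0, h0⟩]
      exact subset_closure hx
    rw [← hga]
    refine le_on_closure (f := fun x => (g x).re) (g := fun _ => (g (-(l⁻¹ • a))).re)
      (fun y hy => (hg' y hy).le) ?_ continuousOn_const hx'
    exact (Complex.continuous_re.comp g.continuous).continuousOn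
  have hneg : 0 < - (g a).re := by
    have h1 := hg' 0 h0
    simp only [map_zero] at h1
    change (0 : ℂ).re < (g (-(l⁻¹ • a))).re at h1
    rw [hga, Complex.zero_re, ← mul_neg] at h1
    exact (pos_iff_pos_of_mul_pos h1).1 (by positivity)
  have hα : ∀ x ∈ K, ((-g) x).re ≤ -(g a).re := by
    intro x hx
    have h1 := hle _ (hN x hx)
    rw [map_neg, hre, Complex.neg_re, Complex.re_ofReal_mul] at h1
    have h2 : (g a).re ≤ (g x).re := by
      have : l⁻¹ * (g a).re ≤ l⁻¹ * (g x).re := by linarith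
      exact le_of_mul_le_mul_left this (by positivity)
    simpa using h2
  refine ⟨l⁻¹, -(g a).re, -g, by positivity, ?_, hneg, hN, hα, ?_, a, haK, by simp⟩
  · have h1 := hα _ (hN _ (hN a haK))
    have h2 : ((-g) (-(l⁻¹ • -(l⁻¹ • a)))).re = l⁻¹ * (l⁻¹ * (-(g a).re)) := by
      rw [smul_neg, neg_neg]
      change (-(g (l⁻¹ • l⁻¹ • a))).re = _
      rw [hre, hre, Complex.neg_re, Complex.re_ofReal_mul, Complex.re_ofReal_mul]
      ring
    rw [h2] at h1
    by_contra hcon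
    push Not at hcon
    have : 1 < l⁻¹ * l⁻¹ := by nlinarith
    nlinarith
  · intro x hx
    have := hle x hx
    change _ ≤ (-(g x)).re
    rw [Complex.neg_re]
    linarith

/-- Directions along which `b` is a two-sided interior point of `K`. -/
def faceDir {n : ℕ} (K : Set (EuclideanSpace ℂ (Fin n))) (hconv : Convex ℝ K)
    (b : EuclideanSpace ℂ (Fin n)) (hb : b ∈ K) : Submodule ℝ (EuclideanSpace ℂ (Fin n)) where
  carrier := {v | ∃ ε : ℝ, 0 < ε ∧ ∀ s : ℝ, |s| ≤ ε → b + s • v ∈ K}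
  zero_mem' := ⟨1, one_pos, fun s _ => by simpa using hb⟩
  add_mem' := by
    rintro v w ⟨ε, hε, hv⟩ ⟨δ, hδ, hw⟩
    refine ⟨min ε δ / 2, by positivity, fun s hs => ?_⟩
    have h2 : |2 * s| ≤ min ε δ := by
      rw [abs_mul, abs_two]; linarith
    have := hconv (hv (2 * s) (h2.trans (min_le_left _ _))) (hw (2 * s) (h2.trans (min_le_right _ _)))
      (a := 1/2) (b := 1/2) (by norm_num) (by norm_num) (by norm_num)
    convert this using 1
    module
  smul_mem' := by
    rintro r v ⟨ε, hε, hv⟩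
    refine ⟨ε / (|r| + 1), by positivity, fun s hs => ?_⟩
    rw [smul_smul]
    apply hv
    rw [abs_mul]
    rw [le_div_iff₀ (by positivity)] at hs
    nlinarith [abs_nonneg s, abs_nonneg r]

lemma mem_faceDir {n : ℕ} {K : Set (EuclideanSpace ℂ (Fin n))} {hconv : Convex ℝ K}
    {b : EuclideanSpace ℂ (Fin n)} {hb : b ∈ K} {v : EuclideanSpace ℂ (Fin n)} :
    v ∈ faceDir K hconv b hb ↔ ∃ ε : ℝ, 0 < ε ∧ ∀ s : ℝ, |s| ≤ ε → b + s • v ∈ K := Iff.rfl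

lemma mem_faceDir_of {n : ℕ} {K : Set (EuclideanSpace ℂ (Fin n))} {hconv : Convex ℝ K}
    {b : EuclideanSpace ℂ (Fin n)} {hb : b ∈ K} {v : EuclideanSpace ℂ (Fin n)} {p q : ℝ}
    (hp : 0 < p) (hq : 0 < q) (h1 : b + p • v ∈ K) (h2 : b - q • v ∈ K) :
    v ∈ faceDir K hconv b hb := by
  refine ⟨min p q, by positivity, fun s hs => ?_⟩
  obtain ⟨hs1, hs2⟩ := abs_le.1 hs
  have hsp := hs2.trans (min_le_left p q)
  have hsq : -q ≤ s := by linarith [min_le_right p q]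
  have hpq : 0 < p + q := by positivity
  have := hconv h1 h2 (a := (q + s) / (p + q)) (b := (p - s) / (p + q))
    (div_nonneg (by linarith) hpq.le) (div_nonneg (by linarith) hpq.le) (by field_simp; ring)
  convert this using 1
  match_scalars
  · field_simp; ring
  · field_simp; ring

/-- All but finitely many members of a pencil are injective on `V`. -/
lemma finite_bad {E : Type*} [AddCommGroup E] [Module ℝ E] [Module ℂ E] [IsScalarTower ℝ ℂ E]
    (V : Submodule ℝ E) [FiniteDimensional ℝ V] (ψ₀ ψ₁ : E →ₗ[ℂ] ℂ)
    (h : ∀ v ∈ V, ψ₀ v = 0 → v = 0) :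
    {t : ℝ | ∃ v ∈ V, v ≠ 0 ∧ ψ₁ v + t * ψ₀ v = 0}.Finite := by
  let g₀ : V →ₗ[ℝ] ℂ := (ψ₀.restrictScalars ℝ).comp V.subtype
  let g₁ : V →ₗ[ℝ] ℂ := (ψ₁.restrictScalars ℝ).comp V.subtype
  have hker : LinearMap.ker g₀ = ⊥ := by
    rw [LinearMap.ker_eq_bot']
    rintro ⟨v, hv⟩ hv0
    ext
    exact h v hv hv0
  obtain ⟨ρ, hρ⟩ := LinearMap.exists_leftInverse_of_injective g₀ hker
  have hfin := Module.End.finite_hasEigenvalue (ρ.comp g₁ : Module.End ℝ V)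
  refine (hfin.image (fun x => -x)).subset ?_
  rintro t ⟨v, hv, hv0, hvt⟩
  refine ⟨-t, ?_, neg_neg t⟩
  refine Module.End.hasEigenvalue_of_hasEigenvector (x := (⟨v, hv⟩ : V)) ⟨?_, ?_⟩
  · rw [Module.End.mem_eigenspace_iff]
    have h1 : g₁ ⟨v, hv⟩ = (-t) • g₀ ⟨v, hv⟩ := by
      change ψ₁ v = (-t) • ψ₀ v
      rw [Complex.real_smul, Complex.ofReal_neg]
      linear_combination hvt
    have h2 : ρ (g₀ ⟨v, hv⟩) = ⟨v, hv⟩ := LinearMap.congr_fun hρ _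
    rw [LinearMap.comp_apply, h1, map_smul, h2]
  · intro hzero
    exact hv0 (congrArg Subtype.val hzero)

/-- Basic information about the centre of a section meeting the top face. -/
lemma face_info {n : ℕ} {K : Set (EuclideanSpace ℂ (Fin n))} {μ α : ℝ}
    {φ : EuclideanSpace ℂ (Fin n) →L[ℂ] ℂ} (hμ : 0 < μ)
    (hN : ∀ x ∈ K, -(μ • x) ∈ K) (hup : ∀ x ∈ K, (φ x).re ≤ α)
    (hlo : ∀ x ∈ K, -(μ * α) ≤ (φ x).re)
    {ψ : EuclideanSpace ℂ (Fin n) →ₗ[ℂ] ℂ} {c : EuclideanSpace ℂ (Fin n)}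
    (hc : ∀ ξ : ℂ, ‖ξ‖ = 1 → ∀ x ∈ K, ψ x = 0 → c + ξ • (x - c) ∈ K)
    {a : EuclideanSpace ℂ (Fin n)} (haK : a ∈ K) (haψ : ψ a = 0) (haφ : (φ a).re = α) :
    2 * (φ c).re = (1 - μ) * α ∧ φ a = α := by
  have hre : ∀ (r : ℝ) (x : EuclideanSpace ℂ (Fin n)), φ (r • x) = r * φ x := by
    intro r x
    rw [← Complex.coe_smul r x, map_smul, smul_eq_mul]
  have hbψ : ψ (-(μ • a)) = 0 := by
    rw [← Complex.coe_smul, map_neg, map_smul, haψ]; simp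
  have hval : ∀ ξ : ℂ, ‖ξ‖ = 1 → ∀ x ∈ K, ψ x = 0 →
      (φ c).re + (ξ * (φ x - φ c)).re ≤ α ∧ -(μ * α) ≤ (φ c).re + (ξ * (φ x - φ c)).re := by
    intro ξ hξ x hx hxψ
    have h := hc ξ hξ x hx hxψ
    have h1 := hup _ h
    have h2 := hlo _ h
    simp only [map_add, map_smul, map_sub, smul_eq_mul, Complex.add_re] at h1 h2
    exact ⟨h1, h2⟩
  have hbφ : φ (-(μ • a)) = -(μ * φ a) := by rw [map_neg, hre]
  have e1 := (hval (-1) (by simp) a haK haψ).2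
  have e2 := (hval (-1) (by simp) _ (hN a haK) hbψ).1
  rw [hbφ] at e2
  simp only [neg_mul, one_mul, Complex.neg_re, Complex.sub_re, Complex.re_ofReal_mul, haφ]
    at e1 e2
  have hcre : 2 * (φ c).re = (1 - μ) * α := by linarith
  refine ⟨hcre, ?_⟩
  have key : ∀ x ∈ K, ψ x = 0 → ((φ x - φ c).re)^2 = (α - (φ c).re)^2 → (φ x).im = (φ c).im := by
    intro x hx hxψ hsq
    set w := φ x - φ c with hw
    have hn : ‖w‖ ≤ α - (φ c).re := by
      by_cases hw0 : w = 0
      · rw [hw0] at hsq ⊢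
        have h3 := (hval 1 (by simp) x hx hxψ).1
        rw [← hw, hw0] at h3
        simp at h3
        simpa using h3
      · have hw1 : (‖w‖ : ℂ) ≠ 0 := by simpa using hw0
        have h3 := (hval ((starRingEnd ℂ) w / ‖w‖) (by simp [hw0]) x hx hxψ).1
        rw [← hw] at h3
        have h4 : (starRingEnd ℂ) w / ‖w‖ * w = (‖w‖ : ℂ) := by
          rw [div_mul_eq_mul_div, mul_comm, Complex.mul_conj, Complex.normSq_eq_norm_sq]
          field_simp
          push_cast
          ring
        rw [h4, Complex.ofReal_re] at h3
        linarith
    have h5 : ‖w‖ ^ 2 = w.re ^ 2 + w.im ^ 2 := by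
      rw [← Complex.normSq_eq_norm_sq, Complex.normSq_apply]; ring
    have h6 : w.im = 0 := by
      have : w.im ^ 2 ≤ 0 := by nlinarith [norm_nonneg w]
      exact pow_eq_zero_iff (two_ne_zero) |>.1 (le_antisymm this (sq_nonneg _))
    have : (φ x).im - (φ c).im = 0 := by rw [← Complex.sub_im]; exact h6
    linarith
  have k1 := key a haK haψ (by rw [Complex.sub_re, haφ])
  have k2 := key _ (hN a haK) hbψ (by
    rw [hbφ, Complex.sub_re, Complex.neg_re, Complex.re_ofReal_mul, haφ]
    have : -(μ * α) - (φ c).re = -(α - (φ c).re) := by linarith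
    rw [this, neg_sq])
  rw [hbφ, Complex.neg_im, Complex.im_ofReal_mul] at k2
  have him : (φ a).im = 0 := by
    have : (1 + μ) * (φ a).im = 0 := by linarith
    rcases mul_eq_zero.1 this with h | h
    · linarith
    · exact h
  exact Complex.ext (by simpa using haφ) (by simpa using him)

/-- The point `(2 / (1 - μ)) • c` belongs to `K`. -/
lemma fixed_mem {n : ℕ} {K : Set (EuclideanSpace ℂ (Fin n))} (hcl : IsClosed K) {μ : ℝ}
    (hμ : 0 < μ) (hμ1 : μ < 1) (hN : ∀ x ∈ K, -(μ • x) ∈ K)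
    {ψ : EuclideanSpace ℂ (Fin n) →ₗ[ℂ] ℂ} {c : EuclideanSpace ℂ (Fin n)} (hψc : ψ c = 0)
    (hc : ∀ ξ : ℂ, ‖ξ‖ = 1 → ∀ x ∈ K, ψ x = 0 → c + ξ • (x - c) ∈ K)
    {a : EuclideanSpace ℂ (Fin n)} (haK : a ∈ K) (haψ : ψ a = 0) :
    (2 / (1 - μ)) • c ∈ K := by
  have hψr : ∀ (r : ℝ) (x : EuclideanSpace ℂ (Fin n)), ψ (r • x) = r * ψ x := by
    intro r x
    rw [← Complex.coe_smul r x, map_smul, smul_eq_mul]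
  have h1μ : 1 - μ ≠ 0 := by linarith
  obtain ⟨m, hm⟩ : ∃ m, m = (2 / (1 - μ)) • c := ⟨_, rfl⟩
  rw [← hm]
  have hψm : ψ m = 0 := by rw [hm, hψr, hψc, mul_zero]
  have hcm : c = ((1 - μ) / 2) • m := by
    rw [hm, smul_smul]
    have : (1 - μ) / 2 * (2 / (1 - μ)) = 1 := by field_simp
    rw [this, one_smul]
  have hiter : ∀ k : ℕ, m + μ ^ k • (a - m) ∈ K := by
    intro k
    induction k with
    | zero => simpa using haK
    | succ k ih =>
      have h1 := hc (-1) (by simp) _ (hN _ ih) (by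
        rw [map_neg, hψr, map_add, hψr, map_sub, hψm, haψ]; simp)
      convert h1 using 1
      rw [neg_one_smul]
      rw [hcm]
      module
  have ht : Tendsto (fun k : ℕ => m + μ ^ k • (a - m)) atTop (𝓝 (m + (0 : ℝ) • (a - m))) :=
    tendsto_const_nhds.add
      ((tendsto_pow_atTop_nhds_zero_of_lt_one hμ.le hμ1).smul tendsto_const_nhds)
  rw [zero_smul, add_zero] at ht
  exact hcl.mem_of_tendsto ht (Eventually.of_forall hiter)

set_option maxHeartbeats 1000000 in
theorem main0 {n : ℕ} (hn : 3 ≤ n) (K : Set (EuclideanSpace ℂ (Fin n)))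
    (hcomp : IsCompact K) (hconv : Convex ℝ K)
    (h0 : (0 : EuclideanSpace ℂ (Fin n)) ∈ interior K)
    (hS : ∀ ψ : EuclideanSpace ℂ (Fin n) →ₗ[ℂ] ℂ, ψ ≠ 0 → ∃ c, ψ c = 0 ∧
      ∀ ξ : ℂ, ‖ξ‖ = 1 → ∀ x ∈ K, ψ x = 0 → c + ξ • (x - c) ∈ K) :
    ∃ c : EuclideanSpace ℂ (Fin n), ∀ ξ : ℂ, ‖ξ‖ = 1 → ∀ x ∈ K, c + ξ • (x - c) ∈ K := by
  obtain ⟨μ, α, φ, hμ, hμ1, hα, hN, hup, hlo, a₀, ha₀K, ha₀⟩ :=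
    exists_extremal hn K hcomp hconv h0
  have hcl := hcomp.isClosed
  have hφr : ∀ (r : ℝ) (x : EuclideanSpace ℂ (Fin n)), φ (r • x) = r * φ x := by
    intro r x
    rw [← Complex.coe_smul r x, map_smul, smul_eq_mul]
  have hψr : ∀ (ψ : EuclideanSpace ℂ (Fin n) →ₗ[ℂ] ℂ) (r : ℝ) (x : EuclideanSpace ℂ (Fin n)),
      ψ (r • x) = r * ψ x := by
    intro ψ r x
    rw [← Complex.coe_smul r x, map_smul, smul_eq_mul]
  rcases hμ1.eq_or_lt with h1 | hμ1
  · subst h1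
    refine ⟨0, fun ξ hξ x hx => ?_⟩
    obtain ⟨ψ, hψ, hψx, -⟩ := exists_dual hn x x
    obtain ⟨c, hψc, hc⟩ := hS ψ hψ
    have hiter : ∀ k : ℕ, (2 * k : ℝ) • c ∈ K := by
      intro k
      induction k with
      | zero => simpa using interior_subset h0
      | succ k ih =>
        have h1 := hc (-1) (by simp) _ (hN _ ih) (by
          rw [map_neg, hψr, hψr, hψc]; simp)
        convert h1 using 1
        rw [neg_one_smul]
        push_cast
        module
    have hc0 : c = 0 := by
      by_contra hne
      obtain ⟨R, hR⟩ := hcomp.isBounded.exists_norm_le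
      obtain ⟨k, hk⟩ := exists_nat_gt (R / ‖c‖)
      have h2 := hR _ (hiter k)
      have hcp : 0 < ‖c‖ := norm_pos_iff.2 hne
      rw [norm_smul, Real.norm_of_nonneg (by positivity)] at h2
      rw [div_lt_iff₀ hcp] at hk
      have : (0 : ℝ) ≤ k * ‖c‖ := by positivity
      nlinarith
    have := hc ξ hξ x hx hψx
    rwa [hc0] at this
  have hFcomp : IsCompact (K ∩ {x | (φ x).re = α}) :=
    hcomp.inter_right (isClosed_eq (Complex.continuous_re.comp φ.continuous) continuous_const)
  obtain ⟨a, ⟨haK, haφ⟩, hamax⟩ := hFcomp.exists_isMaxOn ⟨a₀, ha₀K, ha₀⟩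
    continuous_norm.continuousOn
  change (φ a).re = α at haφ
  have hamax' : ∀ x ∈ K, (φ x).re = α → ‖x‖ ≤ ‖a‖ := fun x hx hx' => hamax ⟨hx, hx'⟩
  have hFφ : ∀ x ∈ K, (φ x).re = α → φ x = α := by
    intro x hx hxα
    obtain ⟨ψ, hψ, hψx, -⟩ := exists_dual hn x x
    obtain ⟨c, hψc, hc⟩ := hS ψ hψ
    exact (face_info hμ hN hup hlo hc hx hψx hxα).2
  have hφa := hFφ a haK haφ
  have hαC : (α : ℂ) ≠ 0 := by exact_mod_cast hα.ne'
  have hbK := hN a haK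
  let ψ₀ : EuclideanSpace ℂ (Fin n) →ₗ[ℂ] ℂ :=
    (innerSL ℂ a).toLinearMap - (inner ℂ a a / (α : ℂ)) • φ.toLinearMap
  have hψ₀ : ∀ x, ψ₀ x = inner ℂ a x - (inner ℂ a a / (α : ℂ)) * φ x := fun x => rfl
  have hψ₀a : ψ₀ a = 0 := by
    rw [hψ₀, hφa]; field_simp; ring
  have hψ₀F : ∀ x ∈ K, (φ x).re = α → ψ₀ x = 0 → x = a := by
    intro x hx hxα hx0
    rw [hψ₀, hFφ x hx hxα, div_mul_cancel₀ _ hαC, sub_eq_zero] at hx0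
    have hle := hamax' x hx hxα
    have h1 : ‖x - a‖ ^ 2 = ‖x‖ ^ 2 - ‖a‖ ^ 2 := by
      rw [@norm_sub_sq ℂ, ← inner_conj_symm, hx0, RCLike.conj_re, inner_self_eq_norm_sq]
      ring
    have h2 : ‖x - a‖ ^ 2 ≤ 0 := by
      rw [h1]; nlinarith [norm_nonneg x]
    have h3 : ‖x - a‖ = 0 := pow_eq_zero_iff two_ne_zero |>.1 (le_antisymm h2 (sq_nonneg _))
    exact sub_eq_zero.1 (norm_eq_zero.1 h3)
  set V := faceDir K hconv _ hbK with hV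
  have hVφ : ∀ v ∈ V, (φ v).re = 0 := by
    rintro v ⟨ε, hε, hv⟩
    have e1 := hlo _ (hv ε (abs_of_pos hε).le)
    have e2 := hlo _ (hv (-ε) (by rw [abs_neg, abs_of_pos hε]))
    rw [map_add, map_neg, hφr, hφr, Complex.add_re, Complex.neg_re, Complex.re_ofReal_mul,
      Complex.re_ofReal_mul, haφ] at e1 e2
    have e3 : ε * (φ v).re = 0 := by linarith
    exact (mul_eq_zero.1 e3).resolve_left hε.ne'
  have hinj : ∀ v ∈ V, ψ₀ v = 0 → v = 0 := by
    intro v hv hv0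
    obtain ⟨ψ, hψ, hψa, hψv, hψF⟩ : ∃ ψ : EuclideanSpace ℂ (Fin n) →ₗ[ℂ] ℂ, ψ ≠ 0 ∧ ψ a = 0 ∧
        ψ v = 0 ∧ ∀ x ∈ K, (φ x).re = α → ψ x = 0 → x = a := by
      by_cases h : ψ₀ = 0
      · obtain ⟨ψ, hψ, hψa, hψv⟩ := exists_dual hn a v
        exact ⟨ψ, hψ, hψa, hψv, fun x hx hxα _ => hψ₀F x hx hxα (by rw [h]; rfl)⟩
      · exact ⟨ψ₀, h, hψ₀a, hv0, hψ₀F⟩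
    obtain ⟨c, hψc, hc⟩ := hS ψ hψ
    have hcre := (face_info hμ hN hup hlo hc haK hψa haφ).1
    have hv0 := hVφ v hv
    obtain ⟨ε, hε, hvK⟩ := hv
    have hpt : ∀ s : ℝ, |s| ≤ ε → c + (-1 : ℂ) • ((-(μ • a) + s • v) - c) = a := by
      intro s hs
      have hz : ψ (-(μ • a) + s • v) = 0 := by
        rw [map_add, map_neg, hψr, hψr, hψa, hψv]; simp
      refine hψF _ (hc (-1) (by simp) _ (hvK s hs) hz) ?_ ?_
      · rw [neg_one_smul, map_add, map_neg, map_sub, map_add, map_neg, hφr, hφr]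
        simp only [Complex.add_re, Complex.neg_re, Complex.sub_re, Complex.re_ofReal_mul, hv0,
          haφ]
        linarith
      · rw [map_add, map_smul, map_sub, hz, hψc]; simp
    have e1 := hpt ε (abs_of_pos hε).le
    have e2 := hpt 0 (by simpa using hε.le)
    have e1 := e1.trans e2.symm
    have e3 : ε • v = 0 := by
      rw [neg_one_smul, neg_one_smul, zero_smul, add_zero] at e1
      have e4 := sub_left_injective (neg_injective (add_left_cancel e1))
      exact add_eq_left.1 e4
    exact (smul_eq_zero.1 e3).resolve_left hε.ne'
  have hgood : ∀ ψ : EuclideanSpace ℂ (Fin n) →ₗ[ℂ] ℂ, ψ ≠ 0 → ψ a = 0 →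
      (∀ v ∈ V, ψ v = 0 → v = 0) → ∀ ξ : ℂ, ‖ξ‖ = 1 → ∀ x ∈ K, ψ x = 0 →
      ((1 - μ) / 2) • a + ξ • (x - ((1 - μ) / 2) • a) ∈ K := by
    intro ψ hψ hψa hψV
    obtain ⟨c, hψc, hc⟩ := hS ψ hψ
    have h1μ : 1 - μ ≠ 0 := by linarith
    have hm := fixed_mem hcl hμ hμ1 hN hψc hc haK hψa
    obtain ⟨m, hmdef⟩ : ∃ m, m = (2 / (1 - μ)) • c := ⟨_, rfl⟩
    rw [← hmdef] at hm
    have hψm : ψ m = 0 := by rw [hmdef, hψr, hψc, mul_zero]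
    have hcm : c = ((1 - μ) / 2) • m := by
      rw [hmdef, smul_smul]
      have : (1 - μ) / 2 * (2 / (1 - μ)) = 1 := by field_simp
      rw [this, one_smul]
    have hmV : m - a ∈ V := by
      refine mem_faceDir_of (p := 1 - μ) (q := μ) (by linarith) hμ ?_ ?_
      · have := hc (-1) (by simp) a haK hψa
        convert this using 1
        rw [neg_one_smul, hcm]
        module
      · convert hN m hm using 1
        module
    have hma : m = a := sub_eq_zero.1 (hψV _ hmV (by rw [map_sub, hψm, hψa, sub_zero]))
    rw [hma] at hcm
    rw [← hcm]
    exact hc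
  refine ⟨((1 - μ) / 2) • a, fun ξ hξ => ?_⟩
  generalize ((1 - μ) / 2) • a = c at hgood ⊢
  clear_value V ψ₀
  have hint : ∀ x ∈ interior K, c + ξ • (x - c) ∈ K := by
    intro x hx
    obtain ⟨ψ₁, hψ₁, hψ₁a, hψ₁x⟩ := exists_dual hn a x
    obtain ⟨u, hu⟩ : ∃ u, ψ₁ u ≠ 0 := by
      by_contra hcon
      push Not at hcon
      exact hψ₁ (LinearMap.ext hcon)
    let y : ℝ → EuclideanSpace ℂ (Fin n) := fun t =>
      x - ((ψ₁ x + t * ψ₀ x) / (ψ₁ u + t * ψ₀ u)) • u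
    have hy : ContinuousAt y 0 := by
      have hden : ψ₁ u + ((0 : ℝ) : ℂ) * ψ₀ u ≠ 0 := by simpa using hu
      have h1 : ContinuousAt (fun t : ℝ => ψ₁ x + (t : ℂ) * ψ₀ x) 0 := by fun_prop
      have h2 : ContinuousAt (fun t : ℝ => ψ₁ u + (t : ℂ) * ψ₀ u) 0 := by fun_prop
      have h3 : ContinuousAt
          (fun t : ℝ => (ψ₁ x + (t : ℂ) * ψ₀ x) / (ψ₁ u + (t : ℂ) * ψ₀ u)) 0 := h1.div h2 hden
      exact continuousAt_const.sub (h3.smul continuousAt_const)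
    have hy0 : y 0 = x := by simp [y, hψ₁x]
    have hyt : Tendsto y (𝓝[≠] 0) (𝓝 x) := by
      have := hy.tendsto
      rw [hy0] at this
      exact this.mono_left nhdsWithin_le_nhds
    have hden : ∀ᶠ t : ℝ in 𝓝[≠] 0, ψ₁ u + t * ψ₀ u ≠ 0 := by
      have hcont : ContinuousAt (fun t : ℝ => ψ₁ u + (t : ℂ) * ψ₀ u) 0 := by fun_prop
      have := hcont.eventually_ne (y := 0) (by simpa using hu)
      exact this.filter_mono nhdsWithin_le_nhds
    have hfin := finite_bad V ψ₀ ψ₁ hinj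
    have hnb : ∀ᶠ t : ℝ in 𝓝[≠] 0, t ∉ {t : ℝ | ∃ v ∈ V, v ≠ 0 ∧ ψ₁ v + t * ψ₀ v = 0} := by
      have h1 := (hfin.subset (Set.sdiff_subset (t := {(0:ℝ)}))).isClosed.isOpen_compl.mem_nhds
        (x := (0 : ℝ)) (by simp)
      filter_upwards [nhdsWithin_le_nhds h1, self_mem_nhdsWithin] with t ht ht0 hbad
      exact ht ⟨hbad, ht0⟩
    have hev : ∀ᶠ t : ℝ in 𝓝[≠] 0, c + ξ • (y t - c) ∈ K := by
      filter_upwards [hden, hnb, hyt.eventually (mem_interior_iff_mem_nhds.1 hx)] with t h1 h2 h3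
      have hval : ∀ z, (ψ₁ + (t : ℂ) • ψ₀) z = ψ₁ z + t * ψ₀ z := fun z => rfl
      refine hgood (ψ₁ + (t : ℂ) • ψ₀) ?_ ?_ ?_ ξ hξ (y t) h3 ?_
      · intro h
        apply h1
        rw [← hval, h]; rfl
      · rw [hval, hψ₁a, hψ₀a]; simp
      · intro v hv hv0
        by_contra hne
        exact h2 ⟨v, hv, hne, by rw [← hval]; exact hv0⟩
      · change (ψ₁ + (t : ℂ) • ψ₀) (x - _ • u) = 0
        rw [map_sub, map_smul, hval, hval, smul_eq_mul, div_mul_cancel₀ _ h1, sub_self]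
    refine hcl.mem_of_tendsto ?_ hev
    exact tendsto_const_nhds.add ((hyt.sub tendsto_const_nhds).const_smul ξ)
  intro x hx
  have hx_cl : x ∈ closure (interior K) := by
    rw [hconv.closure_interior_eq_closure_of_nonempty_interior ⟨0, h0⟩]
    exact subset_closure hx
  have hcont : Continuous fun z : EuclideanSpace ℂ (Fin n) => c + ξ • (z - c) := by fun_prop
  have hsub : closure (interior K) ⊆ (fun z => c + ξ • (z - c)) ⁻¹' K :=
    closure_minimal hint (hcl.preimage hcont)
  exact hsub hx_cl

/-- Complex symmetry in pointwise form. -/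
lemma isComplexSymmetric_iff {n : ℕ} (A : Set (EuclideanSpace ℂ (Fin n))) :
    IsComplexSymmetric A ↔ ∃ c : EuclideanSpace ℂ (Fin n),
      ∀ ξ : ℂ, ‖ξ‖ = 1 → ∀ x ∈ A, c + ξ • (x - c) ∈ A := by
  unfold IsComplexSymmetric
  refine exists_congr fun c => ⟨fun h ξ hξ x hx => ?_, fun h ξ hξ => ?_⟩
  · have h1 : ξ • (x - c) ∈ ξ • ((· - c) '' A) := Set.smul_mem_smul_set ⟨x, hx, rfl⟩
    rw [h ξ hξ] at h1
    obtain ⟨y, hy, hyx⟩ := h1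
    have : c + ξ • (x - c) = y := by
      rw [← hyx]; simp
    rw [this]; exact hy
  · have hsub : ∀ ζ : ℂ, ‖ζ‖ = 1 → ∀ z ∈ (· - c) '' A, ζ • z ∈ (· - c) '' A := by
      rintro ζ hζ z ⟨x, hx, rfl⟩
      exact ⟨_, h ζ hζ x hx, by simp⟩
    have hξ0 : ξ ≠ 0 := by
      intro h0; rw [h0, norm_zero] at hξ; exact zero_ne_one hξ
    apply Set.Subset.antisymm
    · rintro z ⟨w, hw, rfl⟩
      exact hsub ξ hξ w hw
    · intro z hz
      refine ⟨ξ⁻¹ • z, hsub ξ⁻¹ (by rw [norm_inv, hξ, inv_one]) z hz, ?_⟩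
      exact smul_inv_smul₀ hξ0 z

end CSym

theorem stmt8 {n : ℕ} (hn : 3 ≤ n)
    (K : Set (EuclideanSpace ℂ (Fin n))) (hK : IsConvexBody K)
    (x₀ : EuclideanSpace ℂ (Fin n)) (hx₀ : x₀ ∈ interior K)
    (hsec : ∀ H : Submodule ℂ (EuclideanSpace ℂ (Fin n)),
      Module.finrank ℂ H = n - 1 →
      IsComplexSymmetric (((· + x₀) '' (H : Set (EuclideanSpace ℂ (Fin n)))) ∩ K)) :
    IsComplexSymmetric K := by
  obtain ⟨hcomp, hconv, -⟩ := hK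
  rw [CSym.isComplexSymmetric_iff]
  set e : EuclideanSpace ℂ (Fin n) ≃ₜ EuclideanSpace ℂ (Fin n) := Homeomorph.addRight x₀ with he
  have hmem : ∀ x, x ∈ e ⁻¹' K ↔ x + x₀ ∈ K := fun x => Iff.rfl
  obtain ⟨c, hc⟩ := CSym.main0 hn (e ⁻¹' K) (e.isCompact_preimage.2 hcomp)
    (hconv.translate_preimage_left x₀)
    (by rw [← e.preimage_interior]; change 0 + x₀ ∈ interior K; rwa [zero_add]) (by
      intro ψ hψ
      have hfr : Module.finrank ℂ (LinearMap.ker ψ) = n - 1 := by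
        have := Module.Dual.finrank_ker_add_one_of_ne_zero (f := ψ) hψ
        rw [finrank_euclideanSpace, Fintype.card_fin] at this
        omega
      obtain ⟨c, hc⟩ := (CSym.isComplexSymmetric_iff _).1 (hsec _ hfr)
      have hstep : ∀ ξ : ℂ, ‖ξ‖ = 1 → ∀ x, x + x₀ ∈ K → ψ x = 0 →
          ψ ((c - x₀) + ξ • (x - (c - x₀))) = 0 ∧ (c - x₀) + ξ • (x - (c - x₀)) + x₀ ∈ K := by
        intro ξ hξ x hx hψx
        obtain ⟨⟨y, hy, hyx⟩, h2⟩ := hc ξ hξ (x + x₀) ⟨⟨x, hψx, rfl⟩, hx⟩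
        have e1 : c + ξ • (x + x₀ - c) = (c - x₀) + ξ • (x - (c - x₀)) + x₀ := by module
        rw [e1] at h2
        refine ⟨?_, h2⟩
        have e2 : y = (c - x₀) + ξ • (x - (c - x₀)) := by
          have hyx' : y + x₀ = _ := hyx
          rw [e1] at hyx'
          exact add_right_cancel hyx'
        rw [← e2]; exact hy
      refine ⟨c - x₀, ?_, fun ξ hξ x hx hψx => (hstep ξ hξ x hx hψx).2⟩
      have h1 := (hstep (-1) (by simp) 0 (by rw [zero_add]; exact interior_subset hx₀)
        (map_zero ψ)).1
      rw [zero_sub, map_add, map_smul, map_neg, smul_eq_mul] at h1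
      have h2 : (2 : ℂ) * ψ (c - x₀) = 0 := by linear_combination h1
      exact (mul_eq_zero.1 h2).resolve_left two_ne_zero)
  refine ⟨c + x₀, fun ξ hξ x hx => ?_⟩
  have h1 := hc ξ hξ (x - x₀) (by rw [hmem, sub_add_cancel]; exact hx)
  rw [hmem] at h1
  convert h1 using 1
  module
end

section
/- A convex body K in ℂⁿ (n ≥ 2) is a complex ellipsoid if and only if for every complex line L, the intersection L ∩ K is either empty, a single point, or a closed disk. -/
/-- A complex ellipsoid: the image of the closed unit ball under an
invertible ℂ-affine transformation. -/
def IsComplexEllipsoid {n : ℕ} (K : Set (EuclideanSpace ℂ (Fin n))) : Prop :=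
  ∃ (L : EuclideanSpace ℂ (Fin n) ≃ₗ[ℂ] EuclideanSpace ℂ (Fin n))
    (b : EuclideanSpace ℂ (Fin n)),
    K = (fun x => L x + b) '' Metric.closedBall 0 1


def Dk (D : Set ℂ) : Prop := ∃ (c : ℂ) (r : ℝ), D = Metric.closedBall c r

lemma cnormsq (z : ℂ) : ‖z‖ ^ 2 = z.re ^ 2 + z.im ^ 2 := by
  rw [Complex.sq_norm, Complex.normSq_apply]; ring

lemma mem_cb (c z : ℂ) (r : ℝ) (hr : 0 ≤ r) :
    z ∈ Metric.closedBall c r ↔ ‖z - c‖ ^ 2 ≤ r ^ 2 := by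
  rw [Metric.mem_closedBall, dist_eq_norm]
  exact (sq_le_sq₀ (norm_nonneg _) hr).symm

/-- quadratic sublevel sets are disks -/
lemma Dk_quad (A : ℝ) (hA : 0 < A) (b : ℂ) (C : ℝ) :
    Dk {t : ℂ | A * ‖t‖ ^ 2 + 2 * (b * t).re + C ≤ 0} := by
  have key : ∀ t : ℂ, A * ‖t‖ ^ 2 + 2 * (b * t).re + C =
      A * ‖t - (-(starRingEnd ℂ b) / (A : ℂ))‖ ^ 2 - (‖b‖ ^ 2 / A - C) := by
    intro t
    have : (-(starRingEnd ℂ b) / (A : ℂ)) = ⟨-b.re / A, b.im / A⟩ := by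
      apply Complex.ext <;> simp [Complex.div_ofReal_re, Complex.div_ofReal_im]
    rw [this]
    simp only [cnormsq, Complex.sub_re, Complex.sub_im, Complex.mul_re]
    field_simp
    ring
  by_cases h : 0 ≤ ‖b‖ ^ 2 / A - C
  · refine ⟨-(starRingEnd ℂ b) / (A : ℂ), Real.sqrt ((‖b‖ ^ 2 / A - C) / A), ?_⟩
    ext t
    rw [mem_cb _ _ _ (Real.sqrt_nonneg _), Real.sq_sqrt (by positivity), Set.mem_ofPred_eq, key,
      le_div_iff₀ hA]
    constructor <;> intro h <;> linarith
  · refine ⟨0, -1, ?_⟩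
    rw [Metric.closedBall_eq_empty.2 (by norm_num)]
    ext t
    simp only [Set.mem_ofPred_eq, Set.mem_empty_iff_false, iff_false, not_le]
    rw [key]
    have : 0 ≤ A * ‖t - (-(starRingEnd ℂ b) / (A : ℂ))‖ ^ 2 := by positivity
    linarith

lemma Dk_half {D : Set ℂ} (hD : Dk D) (h0 : (0 : ℂ) ∈ D) {m : ℂ} (hm : m ≠ 0)
    (hh : ∀ s ∈ D, 0 ≤ (m * s).re) :
    ∃ R : ℝ, 0 ≤ R ∧ ∀ s, s ∈ D ↔ ‖s‖ ^ 2 ≤ R * (m * s).re := by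
  obtain ⟨c, r, rfl⟩ := hD
  have hr : 0 ≤ r := le_trans dist_nonneg (Metric.mem_closedBall.1 h0)
  have hmn : 0 < ‖m‖ := norm_pos_iff.2 hm
  have hm2 := cnormsq m
  set M := ‖m‖ with hM
  have h1 := hh (c - (r / M : ℝ) * starRingEnd ℂ m) (by
    rw [mem_cb _ _ _ hr]
    simp only [sub_sub_cancel_left, norm_neg, norm_mul, RCLike.norm_conj, Complex.norm_real,
      Real.norm_eq_abs]
    rw [abs_of_nonneg (by positivity), ← hM]
    apply le_of_eq; field_simp)
  have h2 : 0 ≤ (m * c).re - r * M := by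
    have : (m * (c - (r / M : ℝ) * starRingEnd ℂ m)).re = (m * c).re - r * M := by
      simp only [Complex.mul_re, Complex.sub_re, Complex.sub_im, Complex.mul_im,
        Complex.ofReal_re, Complex.ofReal_im, Complex.conj_re, Complex.conj_im]
      field_simp
      linear_combination (-r) * hm2.symm
    linarith
  rw [mem_cb _ _ _ hr] at h0
  simp only [zero_sub, norm_neg] at h0
  rw [cnormsq] at h0
  have h3 : (c.re - r * m.re / M) ^ 2 + (c.im + r * m.im / M) ^ 2 ≤ 0 := by
    have : (c.re - r * m.re / M) ^ 2 + (c.im + r * m.im / M) ^ 2 =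
      (c.re ^ 2 + c.im ^ 2) - 2 * r / M * (m * c).re + r ^ 2 := by
      simp only [Complex.mul_re]
      field_simp
      linear_combination (-r ^ 2) * hm2
    rw [this]
    have : 2 * r / M * (r * M) ≤ 2 * r / M * (m * c).re := by
      gcongr; linarith
    have h5 : 2 * r / M * (r * M) = 2 * r ^ 2 := by field_simp
    linarith
  have h4 : c.re = r * m.re / M := by nlinarith [sq_nonneg (c.re - r * m.re / M), sq_nonneg (c.im + r * m.im / M)]
  have h5 : c.im = - (r * m.im / M) := by nlinarith [sq_nonneg (c.re - r * m.re / M), sq_nonneg (c.im + r * m.im / M)]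
  refine ⟨2 * r / M, by positivity, fun s => ?_⟩
  rw [mem_cb _ _ _ hr, cnormsq, cnormsq]
  simp only [Complex.sub_re, Complex.sub_im, Complex.mul_re]
  rw [h4, h5]
  have : (s.re - r * m.re / M) ^ 2 + (s.im - -(r * m.im / M)) ^ 2 =
    s.re ^ 2 + s.im ^ 2 - 2 * r / M * (m.re * s.re - m.im * s.im) + r ^ 2 := by
    field_simp
    linear_combination (-r ^ 2) * hm2
  rw [this]
  constructor <;> intro h <;> linarith

lemma line0 (S : ℂ → ℝ → Prop) (hD : ∀ m k, Dk {t : ℂ | S t (k + (m * t).re)})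
    (hup : ∀ t y y', S t y → y ≤ y' → S t y') (h0 : S 0 0) (hmin : ∀ t y, S t y → 0 ≤ y)
    (h2 : ∃ t y, t ≠ 0 ∧ S t y) :
    ∃ R : ℝ, 0 < R ∧ ∀ t y, S t y ↔ ‖t‖ ^ 2 ≤ R * y := by
  have hR : ∀ m : ℂ, m ≠ 0 → ∃ R : ℝ, 0 ≤ R ∧ ∀ s, S s ((m * s).re) ↔ ‖s‖ ^ 2 ≤ R * (m * s).re := by
    intro m hm
    have := Dk_half (hD m 0) (by simpa using h0) hm (by
      intro s hs
      have := hmin _ _ hs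
      simpa using this)
    simpa using this
  choose! R hR0 hR using hR
  -- comparing two real-independent functionals
  have hcmp0 : ∀ m m' s : ℂ, m ≠ 0 → m' ≠ 0 → (m * s).re = (m' * s).re → 0 < (m * s).re →
      R m ≤ R m' := by
    intro m m' s hm hm' hs hpos
    have hs0 : s ≠ 0 := by rintro rfl; simp at hpos
    have hsn : 0 < ‖s‖ ^ 2 := by have := norm_pos_iff.2 hs0; positivity
    set c := (m * s).re with hc
    set τ : ℝ := R m * c / ‖s‖ ^ 2 with hτ
    have e1 : ∀ m : ℂ, (m * ((τ : ℂ) * s)).re = τ * (m * s).re := by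
      intro m; simp [Complex.mul_re, Complex.mul_im]; ring
    have hτ0 : 0 ≤ τ := by have := hR0 m hm; positivity
    have e2 : ‖(τ : ℂ) * s‖ ^ 2 = τ ^ 2 * ‖s‖ ^ 2 := by
      rw [norm_mul, mul_pow, Complex.norm_real, Real.norm_eq_abs, sq_abs]
    have a1 := (hR m hm ((τ : ℂ) * s)).2 (by
      rw [e1, e2, ← hc, hτ]; apply le_of_eq; field_simp)
    rw [e1, ← hc, hs, ← e1 m', hR m' hm', e1, e2, ← hs] at a1
    rcases eq_or_lt_of_le hτ0 with h | h
    · have h' : R m * c = 0 := by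
        rw [eq_comm, hτ, div_eq_zero_iff] at h
        rcases h with h | h
        · exact h
        · linarith
      have : R m = 0 := by rcases mul_eq_zero.1 h' with h | h; exact h; linarith
      rw [this]; exact hR0 m' hm'
    · have a2 : τ * ‖s‖ ^ 2 ≤ R m' * c := by
        have : τ * (τ * ‖s‖ ^ 2) ≤ τ * (R m' * c) := by linarith
        exact le_of_mul_le_mul_left this h
      have a3 : τ * ‖s‖ ^ 2 = R m * c := by rw [hτ]; field_simp
      rw [a3] at a2
      exact le_of_mul_le_mul_right a2 hpos
  have hcmp : ∀ m m' : ℂ, m.re * m'.im - m.im * m'.re ≠ 0 → R m = R m' := by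
    intro m m' hne
    have hm : m ≠ 0 := by rintro rfl; simp at hne
    have hm' : m' ≠ 0 := by rintro rfl; simp at hne
    have : ∃ s, (m * s).re = (m' * s).re ∧ 0 < (m * s).re := by
      rcases lt_or_gt_of_ne hne with h | h
      · refine ⟨⟨m.im - m'.im, m.re - m'.re⟩, ?_, ?_⟩
        · simp only [Complex.mul_re]; ring
        · simp only [Complex.mul_re]; linarith
      · refine ⟨⟨-(m.im - m'.im), -(m.re - m'.re)⟩, ?_, ?_⟩
        · simp only [Complex.mul_re]; ring
        · simp only [Complex.mul_re]; linarith
    obtain ⟨s, hs, hp⟩ := this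
    exact le_antisymm (hcmp0 m m' s hm hm' hs hp) (hcmp0 m' m s hm' hm hs.symm (hs ▸ hp))
  have hconst : ∀ m : ℂ, m ≠ 0 → R m = R 1 := by
    intro m hm
    by_cases h : m.im = 0
    · have hr : m.re ≠ 0 := fun h' => hm (Complex.ext h' h)
      rw [hcmp m Complex.I (by simpa [h] using hr), hcmp Complex.I 1 (by simp)]
    · exact hcmp m 1 (by simpa using h)
  have hfin : ∀ t y, t ≠ 0 → (S t y ↔ ‖t‖ ^ 2 ≤ R 1 * y) := by
    intro t y ht
    have hm : ((y : ℂ) + Complex.I) / t ≠ 0 := by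
      apply div_ne_zero _ ht
      intro h
      have := congrArg Complex.im h
      simp at this
    have e : (((y : ℂ) + Complex.I) / t * t).re = y := by
      rw [div_mul_cancel₀ _ ht]; simp
    have := hR _ hm t
    rwa [e, hconst _ hm] at this
  have hpos : 0 < R 1 := by
    obtain ⟨t, y, ht, hty⟩ := h2
    have := (hfin t y ht).1 hty
    have h3 := hmin _ _ hty
    have : 0 < ‖t‖ ^ 2 := by have := norm_pos_iff.2 ht; positivity
    by_contra hcon
    nlinarith
  refine ⟨R 1, hpos, fun t y => ?_⟩
  by_cases ht : t = 0
  · subst ht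
    constructor
    · intro h; have := hmin _ _ h; simp; positivity
    · intro h
      simp only [norm_zero, ne_eq, OfNat.ofNat_ne_zero, not_false_eq_true, zero_pow] at h
      exact hup _ _ _ h0 (by by_contra hcon; nlinarith)
  · exact hfin t y ht

lemma Dk_shift {D : Set ℂ} (h : Dk D) (a : ℂ) : Dk {t | t + a ∈ D} := by
  obtain ⟨c, r, rfl⟩ := h
  refine ⟨c - a, r, ?_⟩
  ext t
  simp only [Set.mem_ofPred_eq, Metric.mem_closedBall, dist_eq_norm]
  rw [show t + a - c = t - (c - a) by ring]

lemma line1 (S : ℂ → ℝ → Prop) (hD : ∀ m k, Dk {t : ℂ | S t (k + (m * t).re)})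
    (hup : ∀ t y y', S t y → y ≤ y' → S t y') (t0 : ℂ) (y0 : ℝ) (h0 : S t0 y0)
    (hmin : ∀ t y, S t y → y0 ≤ y)
    (h2 : ∃ t y, t ≠ t0 ∧ S t y) :
    ∃ R : ℝ, 0 < R ∧ ∀ t y, S t y ↔ ‖t - t0‖ ^ 2 ≤ R * (y - y0) := by
  obtain ⟨R, hR, h⟩ := line0 (fun t y => S (t + t0) (y + y0)) (by
      intro m k
      have := Dk_shift (hD m (k + y0 - (m * t0).re)) t0
      convert this using 3
      simp only [Set.mem_ofPred_eq]
      rw [mul_add, Complex.add_re]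
      ring_nf)
    (fun t y y' h h' => hup _ _ _ h (by linarith)) (by simpa using h0)
    (fun t y h => by have := hmin _ _ h; linarith)
    (by
      obtain ⟨t, y, ht, hy⟩ := h2
      exact ⟨t - t0, y - y0, sub_ne_zero.2 ht, by simpa using hy⟩)
  refine ⟨R, hR, fun t y => ?_⟩
  have := h (t - t0) (y - y0)
  simpa using this

section core
variable {E : Type*} [NormedAddCommGroup E] [NormedSpace ℂ E]

lemma F1 {K : Set E} (h0 : (0 : E) ∈ K) (w : E →ₗ[ℂ] ℂ)
    (hw : ∀ y ∈ K, y ≠ 0 → 0 < (w y).re)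
    (hd : ∀ p v : E, v ≠ 0 → Dk {z : ℂ | p + z • v ∈ K}) (x : E) (hx : w x = 1) :
    ∃ R : ℝ, 0 ≤ R ∧ ∀ s : ℂ, s • x ∈ K ↔ ‖s‖ ^ 2 ≤ R * s.re := by
  have hx0 : x ≠ 0 := by rintro rfl; simp at hx
  have := Dk_half (hd 0 x hx0) (by simpa using h0) one_ne_zero (by
    intro s hs
    simp only [Set.mem_ofPred_eq, zero_add] at hs
    by_cases h : s • x = 0
    · have : s = 0 := by simpa [hx0] using h
      simp [this]
    · have := hw _ hs h
      simp [hx] at this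
      simpa using this.le)
  simpa using this

def PP (K : Set E) (x : E) (y : ℝ) : Prop := 0 < y ∧ ((y : ℂ)⁻¹) • x ∈ K

lemma F2 {K : Set E} (h0 : (0 : E) ∈ K) (w : E →ₗ[ℂ] ℂ)
    (hw : ∀ y ∈ K, y ≠ 0 → 0 < (w y).re)
    (hd : ∀ p v : E, v ≠ 0 → Dk {z : ℂ | p + z • v ∈ K}) (x : E) (hx : w x = 1) :
    ∃ R : ℝ, 0 ≤ R ∧ (∀ ω : ℂ, ω ≠ 0 → (ω⁻¹ • x ∈ K ↔ 1 ≤ R * ω.re)) ∧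
      (∀ y : ℝ, PP K x y ↔ 1 ≤ R * y) := by
  obtain ⟨R, hR, h⟩ := F1 h0 w hw hd x hx
  have h1 : ∀ ω : ℂ, ω ≠ 0 → (ω⁻¹ • x ∈ K ↔ 1 ≤ R * ω.re) := by
    intro ω hω
    have : 0 < Complex.normSq ω := Complex.normSq_pos.2 hω
    rw [h, Complex.inv_re, Complex.sq_norm, Complex.normSq_inv, ← mul_div_assoc, inv_eq_one_div,
      div_le_div_iff_of_pos_right this]
  refine ⟨R, hR, h1, fun y => ?_⟩
  constructor
  · rintro ⟨hy, h⟩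
    have := (h1 y (by exact_mod_cast hy.ne')).1 h
    simpa using this
  · intro h
    have hy : 0 < y := by by_contra hcon; nlinarith
    exact ⟨hy, (h1 y (by exact_mod_cast hy.ne')).2 (by simpa using h)⟩

lemma F3 {K : Set E} (h0 : (0 : E) ∈ K) (w : E →ₗ[ℂ] ℂ)
    (hw : ∀ y ∈ K, y ≠ 0 → 0 < (w y).re)
    (hd : ∀ p v : E, v ≠ 0 → Dk {z : ℂ | p + z • v ∈ K}) (x : E) (hx : w x = 1)
    (β : E) (hβ : w β = 0) (hβ0 : β ≠ 0) (m : ℂ) (k : ℝ) :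
    Dk {t : ℂ | PP K (x + t • β) (k + (m * t).re)} := by
  set κ : ℂ := (k : ℂ) + Complex.I with hκ
  have hκ0 : κ ≠ 0 := by
    intro h; have := congrArg Complex.im h; simp [hκ] at this
  have hxβ : ∀ a b : ℂ, a • x + b • β = 0 → b = 0 := by
    intro a b h
    have h1 := congrArg w h
    simp [hx, hβ] at h1
    subst h1
    simpa [hβ0] using h
  have step1 : ∀ t : ℂ, PP K (x + t • β) (k + (m * t).re) ↔
      κ + m * t ≠ 0 ∧ (κ + m * t)⁻¹ • (x + t • β) ∈ K := by
    intro t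
    obtain ⟨R, hR, h1, h2⟩ := F2 h0 w hw hd (x + t • β) (by simp [hx, hβ])
    have e : (κ + m * t).re = k + (m * t).re := by simp [hκ]
    rw [h2, ← e]
    constructor
    · intro h
      have : κ + m * t ≠ 0 := by intro h'; rw [h'] at h; simp at h; linarith
      exact ⟨this, (h1 _ this).2 h⟩
    · rintro ⟨ha, hb⟩
      exact (h1 _ ha).1 hb
  set v : E := β - (m / κ) • x with hv
  have hv0 : v ≠ 0 := by
    intro h
    have := hxβ (-(m / κ)) 1 (by rw [← h, hv]; module)
    exact one_ne_zero this
  obtain ⟨c, r, hcr⟩ := hd (κ⁻¹ • x) v hv0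
  have step2 : ∀ t : ℂ, κ + m * t ≠ 0 →
      ((κ + m * t)⁻¹ • (x + t • β) ∈ K ↔ t / (κ + m * t) ∈ Metric.closedBall c r) := by
    intro t ht
    rw [← hcr, Set.mem_ofPred_eq]
    have : (κ + m * t)⁻¹ • (x + t • β) = κ⁻¹ • x + (t / (κ + m * t)) • v := by
      rw [hv]
      have e1 : (κ + m * t)⁻¹ = κ⁻¹ - (t / (κ + m * t)) * (m / κ) := by
        field_simp
        ring
      rw [smul_sub, smul_smul, smul_add, smul_smul]
      have e2 : (κ + m * t)⁻¹ * t = t / (κ + m * t) := by field_simp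
      rw [e2]
      nth_rewrite 1 [e1]
      module
    rw [this]
  by_cases hr : 0 ≤ r
  swap
  · refine ⟨0, -1, ?_⟩
    rw [Metric.closedBall_eq_empty.2 (by norm_num)]
    ext t
    simp only [Set.mem_ofPred_eq, Set.mem_empty_iff_false, iff_false]
    rw [step1]
    rintro ⟨h1, h2⟩
    rw [step2 t h1, Metric.closedBall_eq_empty.2 (by linarith)] at h2
    exact h2
  have hpole : ∀ s ∈ Metric.closedBall c r, m * s ≠ 1 := by
    intro s hs hms
    rw [← hcr, Set.mem_ofPred_eq] at hs
    have hne : κ⁻¹ • x + s • v ≠ 0 := by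
      intro h
      have := hxβ (κ⁻¹ - s * (m / κ)) s (by rw [← h, hv]; module)
      rw [this] at hms
      simp at hms
    have := hw _ hs hne
    have e : w (κ⁻¹ • x + s • v) = 0 := by
      simp only [hv, map_add, map_smul, map_sub, hx, hβ, smul_eq_mul]
      linear_combination (- κ⁻¹) * hms
    rw [e] at this
    simp at this
  have hA : r * ‖m‖ < ‖1 - c * m‖ := by
    by_cases hm : m = 0
    · simp [hm]
    · have hmn := norm_pos_iff.2 hm
      by_contra hcon
      push Not at hcon
      refine hpole (1 / m) ?_ (by field_simp)
      rw [Metric.mem_closedBall, dist_eq_norm]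
      have : 1 / m - c = (1 - c * m) / m := by field_simp
      rw [this, norm_div, div_le_iff₀ hmn]
      exact hcon
  have hA2 : 0 < ‖1 - c * m‖ ^ 2 - r ^ 2 * ‖m‖ ^ 2 := by
    have : (r * ‖m‖) ^ 2 < ‖1 - c * m‖ ^ 2 := by gcongr
    rw [mul_pow] at this
    linarith
  have step3 : ∀ t : ℂ, PP K (x + t • β) (k + (m * t).re) ↔
      ‖(1 - c * m) * t - c * κ‖ ^ 2 ≤ r ^ 2 * ‖κ + m * t‖ ^ 2 := by
    intro t
    rw [step1]
    by_cases hz : κ + m * t = 0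
    · simp only [hz, ne_eq, not_true_eq_false, false_and, norm_zero, false_iff, not_le]
      have : (1 - c * m) * t - c * κ = t := by linear_combination (-c) * hz
      rw [this]
      have : t ≠ 0 := by rintro rfl; simp at hz; exact hκ0 hz
      have := norm_pos_iff.2 this
      simp
      positivity
    · have hzn := norm_pos_iff.2 hz
      rw [step2 t hz, mem_cb _ _ _ hr]
      have : t / (κ + m * t) - c = ((1 - c * m) * t - c * κ) / (κ + m * t) := by
        rw [eq_div_iff hz, sub_mul, div_mul_cancel₀ _ hz]; ring
      rw [this, norm_div, div_pow, div_le_iff₀ (by positivity)]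
      simp [hz]
  have := Dk_quad _ hA2 (-(1 - c * m) * starRingEnd ℂ (c * κ) - r ^ 2 * m * starRingEnd ℂ κ)
    (‖c * κ‖ ^ 2 - r ^ 2 * ‖κ‖ ^ 2)
  convert this using 3 with t
  rw [step3, ← sub_nonpos]
  have e : ∀ a b : ℝ, a = b → (a ≤ 0 ↔ b ≤ 0) := by rintro a b rfl; rfl
  apply e
  have ee : ∀ a b : ℂ, ‖a + b‖ ^ 2 = ‖a‖ ^ 2 + ‖b‖ ^ 2 + 2 * (a * starRingEnd ℂ b).re := by
    intro a b
    simp only [cnormsq, Complex.add_re, Complex.add_im, Complex.mul_re, Complex.conj_re,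
      Complex.conj_im]
    ring
  rw [sub_eq_add_neg ((1 - c * m) * t), ee, add_comm κ, ee, norm_neg, norm_mul, norm_mul m t,
    map_neg]
  have e3 : ((-(1 - c * m) * starRingEnd ℂ (c * κ) - r ^ 2 * m * starRingEnd ℂ κ) * t).re =
    ((1 - c * m) * t * -(starRingEnd ℂ (c * κ))).re - r ^ 2 * (m * t * starRingEnd ℂ κ).re := by
    rw [← Complex.re_ofReal_mul, ← Complex.sub_re]
    congr 1
    push_cast
    ring
  rw [e3]
  ring

lemma F4 {K : Set E} (hc : IsCompact K) (h0 : (0 : E) ∈ K) (w : E →ₗ[ℂ] ℂ) (hwc : Continuous w)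
    (hw : ∀ y ∈ K, y ≠ 0 → 0 < (w y).re)
    (hd : ∀ p v : E, v ≠ 0 → Dk {z : ℂ | p + z • v ∈ K}) (x : E) (hx : w x = 1)
    (β : E) (hβ : w β = 0) (hβ0 : β ≠ 0)
    (h2 : ∃ t1 t2 : ℂ, ∃ y1 y2, t1 ≠ t2 ∧ PP K (x + t1 • β) y1 ∧ PP K (x + t2 • β) y2) :
    ∃ (t0 : ℂ) (y0 : ℝ) (R : ℝ), 0 < R ∧
      ∀ (t : ℂ) (y : ℝ), PP K (x + t • β) y ↔ ‖t - t0‖ ^ 2 ≤ R * (y - y0) := by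
  obtain ⟨t1, t2, y1, y2, hne, hp1, hp2⟩ := h2
  -- the compact set
  let V : Submodule ℝ E := Submodule.span ℝ {x, β, Complex.I • β}
  have : FiniteDimensional ℝ V := FiniteDimensional.span_of_finite ℝ (Set.toFinite _)
  have hVc : IsClosed (V : Set E) := Submodule.closed_of_finiteDimensional V
  have hcomp : IsCompact (K ∩ (V : Set E)) := hc.inter_right hVc
  have hmem : ∀ y ∈ V, ∃ (s : ℝ) (t : ℂ), y = (s : ℂ) • x + t • β := by
    intro y hy
    rw [Submodule.mem_span_triple] at hy
    obtain ⟨a, b, c, rfl⟩ := hy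
    refine ⟨a, b + c * Complex.I, ?_⟩
    simp only [add_smul, mul_smul, Complex.coe_smul, add_assoc]
  have hmem' : ∀ (s : ℝ) (t : ℂ), (s : ℂ) • x + t • β ∈ V := by
    intro s t
    rw [Submodule.mem_span_triple]
    refine ⟨s, t.re, t.im, ?_⟩
    nth_rewrite 3 [← Complex.re_add_im t]
    simp only [add_smul, mul_smul, Complex.coe_smul, add_assoc]
  have hPin : ∀ (t : ℂ) (y : ℝ), PP K (x + t • β) y →
      ((y : ℂ)⁻¹) • (x + t • β) ∈ K ∩ (V : Set E) := by
    rintro t y ⟨hy, h⟩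
    refine ⟨h, ?_⟩
    have := hmem' y⁻¹ (((y : ℂ)⁻¹) * t)
    rw [smul_add, smul_smul]
    push_cast at this
    exact this
  have hwv : ∀ (t : ℂ) (y : ℝ), w (((y : ℂ)⁻¹) • (x + t • β)) = ((y⁻¹ : ℝ) : ℂ) := by
    intro t y; simp [hx, hβ]
  obtain ⟨q, hq, hqmax⟩ := hcomp.exists_isMaxOn ⟨_, hPin _ _ hp1⟩
    (f := fun y => (w y).re) (by fun_prop)
  obtain ⟨s, t', rfl⟩ := hmem q hq.2
  have hmx : ∀ (t : ℂ) (y : ℝ), PP K (x + t • β) y → y⁻¹ ≤ s := by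
    intro t y h
    have := hqmax (hPin _ _ h)
    simp only [Set.mem_ofPred_eq, hwv] at this
    simpa [hx, hβ] using this
  have hs : 0 < s := lt_of_lt_of_le (inv_pos.2 hp1.1) (hmx _ _ hp1)
  have hs' : (s : ℂ) ≠ 0 := by exact_mod_cast hs.ne'
  obtain ⟨R, hR, h⟩ := line1 (fun t y => PP K (x + t • β) y)
    (F3 h0 w hw hd x hx β hβ hβ0)
    (by
      intro t y y' h hyy
      obtain ⟨R, hR, h1, h2⟩ := F2 h0 w hw hd (x + t • β) (by simp [hx, hβ])
      rw [h2] at h ⊢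
      nlinarith)
    (t' / s) s⁻¹ (by
      refine ⟨inv_pos.2 hs, ?_⟩
      convert hq.1 using 1
      rw [smul_add, smul_smul]
      push_cast
      rw [inv_inv, mul_div_cancel₀ _ hs'])
    (by
      intro t y h
      exact inv_le_of_inv_le₀ h.1 (hmx _ _ h))
    (by
      by_cases h : t1 = t' / s
      · exact ⟨t2, y2, fun h' => hne (h.trans h'.symm), hp2⟩
      · exact ⟨t1, y1, h, hp1⟩)
  exact ⟨_, _, R, hR, h⟩

end core

lemma core_s16 {E : Type*} [NormedAddCommGroup E] [NormedSpace ℂ E]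
    {K : Set E} (hc : IsCompact K) (h0 : (0 : E) ∈ K) (w : E →ₗ[ℂ] ℂ) (hwc : Continuous w)
    (hw : ∀ y ∈ K, y ≠ 0 → 0 < (w y).re)
    (hd : ∀ p v : E, v ≠ 0 → Dk {z : ℂ | p + z • v ∈ K})
    (q1 : E) (hq1 : q1 ∈ interior K) (hq10 : q1 ≠ 0) :
    ∃ G : E → ℝ, (∀ x, x ∈ K ↔ G x ≤ (w x).re) ∧ (∀ x, x ≠ 0 → 0 < G x) ∧
      (∀ (t : ℂ) x, G (t • x) = ‖t‖ ^ 2 * G x) ∧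
      ∀ u v, ∃ b : ℂ, ∀ t : ℂ, G (u + t • v) = G u + 2 * (b * t).re + ‖t‖ ^ 2 * G v := by
  have hF2 := F2 h0 w hw hd
  -- finiteness of h everywhere
  have hwq1 : w q1 ≠ 0 := by
    intro h
    have := hw _ (interior_subset hq1) hq10
    rw [h] at this; simp at this
  set x1 : E := (w q1)⁻¹ • q1 with hx1
  have hwx1 : w x1 = 1 := by simp [hx1, hwq1]
  have toP : ∀ (x : E) (ω : ℂ), w x = 1 → ω ≠ 0 → ω⁻¹ • x ∈ K → PP K x ω.re := by
    intro x ω hx hω h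
    obtain ⟨R, hR, h1, h2⟩ := hF2 x hx
    exact (h2 _).2 ((h1 _ hω).1 h)
  have hxq : (((w q1)⁻¹)⁻¹) • x1 = q1 := by
    rw [hx1, inv_inv, smul_smul, mul_inv_cancel₀ hwq1, one_smul]
  have hP1 : PP K x1 ((w q1)⁻¹).re :=
    toP x1 _ hwx1 (inv_ne_zero hwq1) (by rw [hxq]; exact interior_subset hq1)
  have hfinite : ∀ x, w x = 1 → ∃ y, PP K x y := by
    intro x hx
    by_cases hxx : x = x1
    · exact ⟨_, hxx ▸ hP1⟩
    set β := x - x1 with hβ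
    have hβ0 : β ≠ 0 := sub_ne_zero.2 hxx
    have hwβ : w β = 0 := by simp [hβ, hx, hwx1]
    have hcont : ContinuousAt (fun t : ℂ => q1 + (w q1 * t) • β) 0 := by fun_prop
    have hev : ∀ᶠ t : ℂ in nhds 0, q1 + (w q1 * t) • β ∈ interior K :=
      hcont.eventually (by
        simp only [mul_zero, zero_smul, add_zero]
        exact isOpen_interior.mem_nhds hq1)
    obtain ⟨t, ht, ht0⟩ :=
      ((hev.filter_mono nhdsWithin_le_nhds).and
        (self_mem_nhdsWithin : {(0 : ℂ)}ᶜ ∈ nhdsWithin (0 : ℂ) {(0 : ℂ)}ᶜ)).exists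
    have ht0 : t ≠ 0 := ht0
    obtain ⟨t0, y0, R, hR, h⟩ := F4 hc h0 w hwc hw hd x1 hwx1 β hwβ hβ0
      ⟨0, t, ((w q1)⁻¹).re, ((w q1)⁻¹).re, ht0.symm, by simpa using hP1, toP _ _ (by simp [hwx1, hwβ])
        (inv_ne_zero hwq1) (by
          rw [smul_add, hxq, inv_inv, smul_smul]
          exact interior_subset ht)⟩
    have := (h 1 (y0 + ‖1 - t0‖ ^ 2 / R)).2 (by
      rw [add_sub_cancel_left, mul_div_cancel₀ _ hR.ne'])
    rw [one_smul, hβ, add_sub_cancel] at this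
    exact ⟨_, this⟩
  -- the function h
  have hh : ∀ x, ∃ h : ℝ, w x = 1 → ∀ y, PP K x y ↔ h ≤ y := by
    intro x
    by_cases hx : w x = 1
    · obtain ⟨R, hR, h1, h2⟩ := hF2 x hx
      obtain ⟨y, hy⟩ := hfinite x hx
      have hR' : 0 < R := by
        rcases hR.eq_or_lt with h | h
        · rw [h2, ← h] at hy; simp at hy; linarith
        · exact h
      refine ⟨1 / R, fun _ y => ?_⟩
      rw [h2, div_le_iff₀' hR']
    · exact ⟨0, fun h => absurd h hx⟩
  choose h hh using hh
  have hline : ∀ x β, w x = 1 → w β = 0 → β ≠ 0 → ∃ (t0 : ℂ) (a c : ℝ), 0 < a ∧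
      ∀ t : ℂ, h (x + t • β) = a * ‖t - t0‖ ^ 2 + c := by
    intro x β hx hβ hβ0
    have hx' : ∀ t : ℂ, w (x + t • β) = 1 := by intro t; simp [hx, hβ]
    obtain ⟨t0, y0, R, hR, hl⟩ := F4 hc h0 w hwc hw hd x hx β hβ hβ0
      ⟨0, 1, h (x + (0 : ℂ) • β), h (x + (1 : ℂ) • β), zero_ne_one,
        (hh _ (hx' 0) _).2 le_rfl, (hh _ (hx' 1) _).2 le_rfl⟩
    refine ⟨t0, R⁻¹, y0, inv_pos.2 hR, fun t => ?_⟩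
    have key : ∀ y, h (x + t • β) ≤ y ↔ R⁻¹ * ‖t - t0‖ ^ 2 + y0 ≤ y := by
      intro y
      rw [← hh _ (hx' t), hl, ← le_sub_iff_add_le, inv_mul_le_iff₀ hR]
    exact le_antisymm ((key _).2 le_rfl) ((key _).1 le_rfl)
  -- global minimizer
  obtain ⟨q, hq, hqmax⟩ := hc.exists_isMaxOn ⟨0, h0⟩ (f := fun y => (w y).re) (by fun_prop)
  have hqpos : 0 < (w q).re :=
    lt_of_lt_of_le (hw _ (interior_subset hq1) hq10) (hqmax (interior_subset hq1))
  have hwq : w q ≠ 0 := by intro h; rw [h] at hqpos; simp at hqpos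
  set x0 : E := (w q)⁻¹ • q with hx0
  have hwx0 : w x0 = 1 := by simp [hx0, hwq]
  have hP0 : PP K x0 ((w q)⁻¹).re :=
    toP x0 _ hwx0 (inv_ne_zero hwq) (by
      rw [hx0, inv_inv, smul_smul, mul_inv_cancel₀ hwq, one_smul]; exact hq)
  have hmin : ∀ x, w x = 1 → h x0 ≤ h x := by
    intro x hx
    have h1 : h x0 ≤ ((w q)⁻¹).re := (hh x0 hwx0 _).1 hP0
    have h2 : ((w q)⁻¹).re ≤ (w q).re⁻¹ := by
      rw [Complex.inv_re, div_le_iff₀ (Complex.normSq_pos.2 hwq), Complex.normSq_apply]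
      have : (w q).re⁻¹ * ((w q).re * (w q).re) = (w q).re := by field_simp
      rw [mul_add, this]
      have : 0 ≤ (w q).re⁻¹ * ((w q).im * (w q).im) :=
        mul_nonneg (inv_nonneg.2 hqpos.le) (mul_self_nonneg _)
      linarith
    obtain ⟨hpos, hK⟩ := (hh x hx _).2 le_rfl
    have h3 := hqmax hK
    have h4 : (w (((h x : ℝ) : ℂ)⁻¹ • x)).re = (h x)⁻¹ := by
      rw [map_smul, hx, smul_eq_mul, mul_one, ← Complex.ofReal_inv, Complex.ofReal_re]
    simp only [Set.mem_ofPred_eq] at h3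
    rw [h4] at h3
    exact h1.trans (h2.trans (inv_le_of_inv_le₀ hpos h3))
  have hh0 : 0 < h x0 := ((hh x0 hwx0 _).2 le_rfl).1
  -- the form N on ker w
  set N : E → ℝ := fun β => h (x0 + β) - h x0 with hN
  have hN0 : N 0 = 0 := by simp [hN]
  have hNl : ∀ β, w β = 0 → β ≠ 0 → ∃ a : ℝ, 0 < a ∧ ∀ t : ℂ, N (t • β) = a * ‖t‖ ^ 2 := by
    intro β hβ hβ0
    obtain ⟨t0, a, c, ha, hl⟩ := hline x0 β hwx0 hβ hβ0
    have e0 := hl 0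
    have e1 := hl t0
    rw [zero_smul, add_zero, zero_sub, norm_neg] at e0
    rw [sub_self, norm_zero] at e1
    have e2 := hmin (x0 + t0 • β) (by simp [hwx0, hβ])
    have ht0 : t0 = 0 := by
      by_contra hne
      have : 0 < a * ‖t0‖ ^ 2 := by have := norm_pos_iff.2 hne; positivity
      rw [e1, e0] at e2
      norm_num at e2
      linarith
    subst ht0
    refine ⟨a, ha, fun t => ?_⟩
    simp only [hN]
    rw [hl, e0]
    simp
  have hNpos : ∀ β, w β = 0 → β ≠ 0 → 0 < N β := by
    intro β hβ hβ0
    obtain ⟨a, ha, hl⟩ := hNl β hβ hβ0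
    have := hl 1
    rw [one_smul] at this
    rw [this]; simpa using ha
  have hNhom : ∀ (t : ℂ) β, w β = 0 → N (t • β) = ‖t‖ ^ 2 * N β := by
    intro t β hβ
    by_cases hβ0 : β = 0
    · simp [hβ0, hN0]
    · obtain ⟨a, ha, hl⟩ := hNl β hβ hβ0
      have := hl 1
      rw [one_smul] at this
      rw [this, hl]; simp; ring
  have hN1 : ∀ u v, w u = 0 → w v = 0 → v ≠ 0 → ∃ (b : ℂ) (a : ℝ), ∀ t : ℂ,
      N (u + t • v) = N u + 2 * (b * t).re + ‖t‖ ^ 2 * a := by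
    intro u v hu hv hv0
    obtain ⟨t0, a, c, ha, hl⟩ := hline (x0 + u) v (by simp [hwx0, hu]) hv hv0
    refine ⟨-a * starRingEnd ℂ t0, a, fun t => ?_⟩
    have e0 := hl 0
    rw [zero_smul, add_zero, zero_sub, norm_neg] at e0
    simp only [hN]
    rw [← add_assoc, hl, e0]
    simp only [cnormsq, Complex.sub_re, Complex.sub_im, Complex.mul_re, Complex.mul_im,
      Complex.neg_re, Complex.neg_im, Complex.ofReal_re, Complex.ofReal_im, Complex.conj_re,
      Complex.conj_im]
    ring
  have hN2 : ∀ u v, w u = 0 → w v = 0 → ∃ b : ℂ, ∀ t : ℂ,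
      N (u + t • v) = N u + 2 * (b * t).re + ‖t‖ ^ 2 * N v := by
    intro u v hu hv
    by_cases hv0 : v = 0
    · exact ⟨0, fun t => by simp [hv0, hN0]⟩
    by_cases hu0 : u = 0
    · exact ⟨0, fun t => by simp [hu0, hN0, hNhom t v hv]⟩
    obtain ⟨b, a, h1⟩ := hN1 u v hu hv hv0
    obtain ⟨b', a', h2⟩ := hN1 v u hv hu hu0
    have key : ∀ τ : ℝ, τ ≠ 0 → N u + 2 * (τ * b.re) + τ ^ 2 * a =
        τ ^ 2 * N v + 2 * (τ * b'.re) + a' := by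
      intro τ hτ
      have hτ' : (τ : ℂ) ≠ 0 := by exact_mod_cast hτ
      have e1 := h1 τ
      have e2 := h2 ((τ⁻¹ : ℝ) : ℂ)
      have e3 : u + (τ : ℂ) • v = (τ : ℂ) • (v + ((τ⁻¹ : ℝ) : ℂ) • u) := by
        rw [smul_add, smul_smul]
        push_cast
        rw [mul_inv_cancel₀ hτ', one_smul, add_comm]
      rw [e3, hNhom _ _ (by simp [hu, hv]), e2] at e1
      simp only [Complex.norm_real, Real.norm_eq_abs, sq_abs, Complex.mul_re, Complex.ofReal_re,
        Complex.ofReal_im, mul_zero, sub_zero] at e1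
      field_simp at e1
      linarith
    have k1 := key 1 (by norm_num)
    have k2 := key (-1) (by norm_num)
    have k3 := key 2 (by norm_num)
    have k4 := key (-2) (by norm_num)
    have : a = N v := by linarith
    rw [this] at h1
    exact ⟨b, h1⟩
  -- the form G
  set π : E → E := fun x => x - w x • x0 with hπ
  have hwπ : ∀ x, w (π x) = 0 := by intro x; simp [hπ, hwx0]
  have hπs : ∀ (t : ℂ) x, π (t • x) = t • π x := by
    intro t x; simp only [hπ, map_smul, smul_eq_mul, smul_sub, smul_smul]
  have hπa : ∀ u v, π (u + v) = π u + π v := by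
    intro u v; simp only [hπ, map_add]; module
  have hGpos : ∀ x, x ≠ 0 → 0 < N (π x) + h x0 * ‖w x‖ ^ 2 := by
    intro x hx
    have hnn : ∀ β, w β = 0 → 0 ≤ N β := by
      intro β hβ
      by_cases hβ0 : β = 0
      · rw [hβ0, hN0]
      · exact (hNpos β hβ hβ0).le
    by_cases hwx : w x = 0
    · have : π x = x := by simp [hπ, hwx]
      rw [this, hwx]
      have := hNpos x hwx hx
      simpa using this
    · have := hnn _ (hwπ x)
      have := norm_pos_iff.2 hwx
      positivity
  refine ⟨fun x => N (π x) + h x0 * ‖w x‖ ^ 2, ?_, hGpos, ?_, ?_⟩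
  · intro x
    by_cases hx : x = 0
    · subst hx
      simp [h0, hπ, hN0]
    by_cases hre : 0 < (w x).re
    swap
    · constructor
      · intro hxK; exact absurd (hw x hxK hx) hre
      · intro hG
        have := hGpos x hx
        simp only at hG
        linarith
    have hwx : w x ≠ 0 := by intro h; rw [h] at hre; simp at hre
    have hn := norm_pos_iff.2 hwx
    set z : E := (w x)⁻¹ • x with hz
    have hwz : w z = 1 := by simp [hz, hwx]
    have hxz : ((w x)⁻¹)⁻¹ • z = x := by
      rw [hz, inv_inv, smul_smul, mul_inv_cancel₀ hwx, one_smul]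
    have h1 : x ∈ K ↔ h z ≤ ((w x)⁻¹).re := by
      obtain ⟨R, hR, a1, a2⟩ := hF2 z hwz
      rw [← hh z hwz, a2, ← a1 _ (inv_ne_zero hwx), hxz]
    have h2 : N (π x) + h x0 * ‖w x‖ ^ 2 = ‖w x‖ ^ 2 * h z := by
      have : π x = w x • (z - x0) := by
        rw [smul_sub, hz, smul_smul, mul_inv_cancel₀ hwx, one_smul]
      rw [this, hNhom _ _ (by simp [hwz, hwx0])]
      simp only [hN, add_sub_cancel]
      ring
    show _ ↔ N (π x) + h x0 * ‖w x‖ ^ 2 ≤ _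
    rw [h1, h2, Complex.inv_re, ← Complex.sq_norm, le_div_iff₀' (by positivity)]
  · intro t x
    simp only
    rw [hπs, hNhom _ _ (hwπ x), map_smul, smul_eq_mul, norm_mul]
    ring
  · intro u v
    obtain ⟨b, hb⟩ := hN2 (π u) (π v) (hwπ u) (hwπ v)
    refine ⟨b + h x0 * (starRingEnd ℂ (w u) * w v), fun t => ?_⟩
    simp only
    rw [hπa, hπs, hb, map_add, map_smul]
    simp only [cnormsq, smul_eq_mul, Complex.add_re, Complex.add_im, Complex.mul_re,
      Complex.mul_im, Complex.ofReal_re, Complex.ofReal_im, Complex.conj_re, Complex.conj_im]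
    ring

lemma gram {V : Type*} [AddCommGroup V] [Module ℂ V] [FiniteDimensional ℂ V] {n : ℕ}
    (hn : Module.finrank ℂ V = n) (G : V → ℝ) (hpos : ∀ x, x ≠ 0 → 0 < G x)
    (hhom : ∀ (t : ℂ) x, G (t • x) = ‖t‖ ^ 2 * G x)
    (hq : ∀ u v, ∃ b : ℂ, ∀ t : ℂ, G (u + t • v) = G u + 2 * (b * t).re + ‖t‖ ^ 2 * G v) :
    ∃ φ : V ≃ₗ[ℂ] EuclideanSpace ℂ (Fin n), ∀ x, G x = ‖φ x‖ ^ 2 := by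
  have hG0 : G 0 = 0 := by simpa using hhom 0 0
  have hnn : ∀ x, 0 ≤ G x := by
    intro x
    by_cases h : x = 0
    · rw [h, hG0]
    · exact (hpos x h).le
  let : Norm V := ⟨fun x => Real.sqrt (G x)⟩
  have hnorm : ∀ x : V, ‖x‖ = Real.sqrt (G x) := fun x => rfl
  have hsq : ∀ x : V, ‖x‖ * ‖x‖ = G x := fun x => Real.mul_self_sqrt (hnn x)
  have core_s16 : NormedSpace.Core ℂ V :=
    { norm_nonneg := fun x => Real.sqrt_nonneg _
      norm_smul := by
        intro c x
        rw [hnorm, hnorm, hhom, Real.sqrt_mul (by positivity), Real.sqrt_sq (norm_nonneg _)]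
      norm_triangle := by
        intro u v
        obtain ⟨b, hb⟩ := hq u v
        rw [hnorm, hnorm, hnorm]
        apply Real.sqrt_le_iff.2
        refine ⟨by positivity, ?_⟩
        have h1 := hb 1
        simp only [one_smul, mul_one, norm_one, one_pow, one_mul] at h1
        have h2 : ∀ τ : ℝ, 0 ≤ G v * (τ * τ) + (2 * b.re) * τ + G u := by
          intro τ
          have := hb τ
          have h3 := hnn (u + (τ : ℂ) • v)
          rw [this] at h3
          simp only [Complex.norm_real, Real.norm_eq_abs, sq_abs, Complex.mul_re,
            Complex.ofReal_re, Complex.ofReal_im, mul_zero, sub_zero] at h3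
          linarith
        have h3 := discrim_le_zero h2
        rw [discrim] at h3
        have h4 : b.re ≤ Real.sqrt (G u) * Real.sqrt (G v) := by
          rw [← Real.sqrt_mul (hnn u)]
          apply Real.le_sqrt_of_sq_le
          linarith
        rw [h1, add_sq, Real.sq_sqrt (hnn u), Real.sq_sqrt (hnn v)]
        linarith
      norm_eq_zero_iff := by
        intro x
        rw [hnorm, Real.sqrt_eq_zero (hnn x)]
        constructor
        · intro h
          by_contra hx
          exact (hpos x hx).ne' h
        · rintro rfl; exact hG0 }
  let : NormedAddCommGroup V := NormedAddCommGroup.ofCore core_s16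
  let : NormedSpace ℂ V := NormedSpace.ofCore core_s16
  let : InnerProductSpace ℂ V := InnerProductSpace.ofNorm ℂ (by
    intro x y
    rw [hsq, hsq, hsq, hsq]
    obtain ⟨b, hb⟩ := hq x y
    have h1 := hb 1
    have h2 := hb (-1)
    rw [neg_one_smul, ← sub_eq_add_neg] at h2
    rw [one_smul] at h1
    rw [h1, h2]
    simp
    ring)
  let φ := ((stdOrthonormalBasis ℂ V).reindex (finCongr hn)).repr
  refine ⟨φ.toLinearEquiv, fun x => ?_⟩
  have : ‖φ x‖ = ‖x‖ := φ.norm_map x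
  show G x = ‖φ x‖ ^ 2
  rw [this, sq, hsq]

section final
variable {E : Type*} [NormedAddCommGroup E] [NormedSpace ℂ E]

lemma three_iff (K : Set E) (p v : E) (hv : v ≠ 0) :
    ({x | ∃ z : ℂ, x = p + z • v} ∩ K = ∅ ∨
        (∃ x : E, {x' | ∃ z : ℂ, x' = p + z • v} ∩ K = {x}) ∨
        (∃ (c : E) (r : ℝ), 0 < r ∧ (∃ z : ℂ, c = p + z • v) ∧
          {x | ∃ z : ℂ, x = p + z • v} ∩ K
            = {x | ∃ z : ℂ, ‖z‖ ≤ r ∧ x = c + z • v})) ↔ Dk {z : ℂ | p + z • v ∈ K} := by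
  have inj : ∀ z z' : ℂ, p + z • v = p + z' • v → z = z' := by
    intro z z' h
    exact smul_left_injective ℂ hv (add_left_cancel h)
  constructor
  · rintro (h | ⟨x, h⟩ | ⟨c, r, hr, ⟨z0, rfl⟩, h⟩)
    · refine ⟨0, -1, ?_⟩
      rw [Metric.closedBall_eq_empty.2 (by norm_num)]
      ext z
      simp only [Set.mem_ofPred_eq, Set.mem_empty_iff_false, iff_false]
      intro hz
      have : p + z • v ∈ ({x | ∃ z : ℂ, x = p + z • v} ∩ K) := ⟨⟨z, rfl⟩, hz⟩
      rw [h] at this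
      exact this
    · have hx : x ∈ ({x | ∃ z : ℂ, x = p + z • v} ∩ K) := by rw [h]; rfl
      obtain ⟨⟨z0, rfl⟩, hxK⟩ := hx
      refine ⟨z0, 0, ?_⟩
      rw [Metric.closedBall_zero]
      ext z
      simp only [Set.mem_ofPred_eq, Set.mem_singleton_iff]
      constructor
      · intro hz
        have : p + z • v ∈ ({x | ∃ z : ℂ, x = p + z • v} ∩ K) := ⟨⟨z, rfl⟩, hz⟩
        rw [h] at this
        exact inj _ _ this
      · rintro rfl; exact hxK
    · refine ⟨z0, r, ?_⟩
      ext z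
      have e : p + z • v ∈ K ↔ p + z • v ∈ ({x | ∃ z : ℂ, x = p + z • v} ∩ K) :=
        ⟨fun hz => ⟨⟨z, rfl⟩, hz⟩, fun hz => hz.2⟩
      rw [Set.mem_ofPred_eq, e, h, Metric.mem_closedBall, dist_eq_norm]
      constructor
      · rintro ⟨z', hz', he⟩
        have := inj z (z0 + z') (by rw [he]; module)
        rw [this, add_sub_cancel_left]; exact hz'
      · intro hz
        exact ⟨z - z0, hz, by module⟩
  · rintro ⟨c, r, h⟩
    have e : ∀ z : ℂ, p + z • v ∈ K ↔ ‖z - c‖ ≤ r := by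
      intro z
      have : z ∈ {z : ℂ | p + z • v ∈ K} ↔ z ∈ Metric.closedBall c r := by rw [h]
      rwa [Metric.mem_closedBall, dist_eq_norm] at this
    rcases lt_trichotomy r 0 with hr | hr | hr
    · left
      ext x
      simp only [Set.mem_inter_iff, Set.mem_ofPred_eq, Set.mem_empty_iff_false, iff_false]
      rintro ⟨⟨z, rfl⟩, hz⟩
      rw [e] at hz
      linarith [norm_nonneg (z - c)]
    · right; left
      refine ⟨p + c • v, ?_⟩
      ext x
      simp only [Set.mem_inter_iff, Set.mem_ofPred_eq, Set.mem_singleton_iff]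
      constructor
      · rintro ⟨⟨z, rfl⟩, hz⟩
        rw [e, hr] at hz
        have : z - c = 0 := norm_le_zero_iff.1 hz
        rw [sub_eq_zero.1 this]
      · rintro rfl
        exact ⟨⟨c, rfl⟩, by rw [e]; simp [hr]⟩
    · right; right
      refine ⟨p + c • v, r, hr, ⟨c, rfl⟩, ?_⟩
      ext x
      simp only [Set.mem_inter_iff, Set.mem_ofPred_eq]
      constructor
      · rintro ⟨⟨z, rfl⟩, hz⟩
        rw [e] at hz
        exact ⟨z - c, hz, by module⟩
      · rintro ⟨z, hz, rfl⟩
        refine ⟨⟨c + z, by module⟩, ?_⟩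
        have := (e (c + z)).2 (by simpa using hz)
        rwa [add_smul, ← add_assoc] at this

end final

lemma normsq_add {n : ℕ} (a b : EuclideanSpace ℂ (Fin n)) (z : ℂ) :
    ‖a + z • b‖ ^ 2 = ‖a‖ ^ 2 + 2 * (inner ℂ a b * z).re + ‖z‖ ^ 2 * ‖b‖ ^ 2 := by
  rw [norm_add_sq (𝕜 := ℂ), inner_smul_right, norm_smul, mul_pow, mul_comm z]
  rfl

theorem stmt16 {n : ℕ} (hn : 2 ≤ n)
    (K : Set (EuclideanSpace ℂ (Fin n))) (hK : IsConvexBody K) :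
    IsComplexEllipsoid K ↔
      ∀ p v : EuclideanSpace ℂ (Fin n), v ≠ 0 →
        {x | ∃ z : ℂ, x = p + z • v} ∩ K = ∅ ∨
        (∃ x : EuclideanSpace ℂ (Fin n),
          {x' | ∃ z : ℂ, x' = p + z • v} ∩ K = {x}) ∨
        (∃ (c : EuclideanSpace ℂ (Fin n)) (r : ℝ), 0 < r ∧ (∃ z : ℂ, c = p + z • v) ∧
          {x | ∃ z : ℂ, x = p + z • v} ∩ K
            = {x | ∃ z : ℂ, ‖z‖ ≤ r ∧ x = c + z • v}) := by
  constructor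
  · rintro ⟨L, b, rfl⟩ p v hv
    rw [three_iff _ p v hv]
    have hv' : L.symm v ≠ 0 := by simpa using hv
    have hvn := norm_pos_iff.2 hv'
    have := Dk_quad (‖L.symm v‖ ^ 2) (by positivity) (inner ℂ (L.symm (p - b)) (L.symm v))
      (‖L.symm (p - b)‖ ^ 2 - 1)
    convert this using 3 with z
    have h1 : p + z • v ∈ (fun x => L x + b) '' Metric.closedBall 0 1 ↔
        ‖L.symm (p - b) + z • L.symm v‖ ≤ 1 := by
      rw [← map_smul, ← map_add]
      constructor
      · rintro ⟨y, hy, he⟩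
        have : p - b + z • v = L y := by
          simp only at he
          rw [sub_add_eq_add_sub, ← he]; simp
        rw [this, LinearEquiv.symm_apply_apply]
        simpa using hy
      · intro h
        refine ⟨L.symm (p - b + z • v), by simpa using h, ?_⟩
        simp only [LinearEquiv.apply_symm_apply]
        abel
    rw [h1, ← sq_le_one_iff₀ (norm_nonneg _), normsq_add]
    constructor <;> intro h <;> linarith
  · intro hd0
    obtain ⟨hc, -, q0, hq0⟩ := hK
    obtain ⟨p, hp, hpmax⟩ := hc.exists_isMaxOn ⟨q0, interior_subset hq0⟩
      (f := fun x => ‖x‖) (by fun_prop)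
    -- translate
    set K0 : Set (EuclideanSpace ℂ (Fin n)) := (fun y => y + p) ⁻¹' K with hK0
    let T := Homeomorph.addRight p
    have hTK : K0 = T ⁻¹' K := rfl
    have hc0 : IsCompact K0 := by
      rw [hTK]; exact T.isCompact_preimage.2 hc
    have hd : ∀ a v : EuclideanSpace ℂ (Fin n), v ≠ 0 → Dk {z : ℂ | a + z • v ∈ K0} := by
      intro a v hv
      have := (three_iff K (a + p) v hv).1 (hd0 (a + p) v hv)
      convert this using 3 with z
      rw [hK0, Set.mem_preimage, add_right_comm]
    let w : EuclideanSpace ℂ (Fin n) →ₗ[ℂ] ℂ := -(innerSL ℂ p).toLinearMap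
    have hwv : ∀ y, w y = - inner ℂ p y := fun y => rfl
    have hwc : Continuous w := LinearMap.continuous_of_finiteDimensional w
    have hw : ∀ y ∈ K0, y ≠ 0 → 0 < (w y).re := by
      intro y hy hy0
      have h1 : ‖y + p‖ ≤ ‖p‖ := hpmax hy
      have h2 : ‖p + (1 : ℂ) • y‖ ^ 2 ≤ ‖p‖ ^ 2 := by
        rw [one_smul, add_comm]; gcongr
      rw [normsq_add] at h2
      have := norm_pos_iff.2 hy0
      rw [hwv, Complex.neg_re]
      simp at h2
      have : 0 < ‖y‖ ^ 2 := by positivity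
      linarith
    have hint : q0 - p ∈ interior K0 := by
      rw [hTK, ← T.preimage_interior]
      show q0 - p + p ∈ interior K
      simpa using hq0
    have hnt : Nontrivial (EuclideanSpace ℂ (Fin n)) := by
      have : Nonempty (Fin n) := ⟨⟨0, by omega⟩⟩
      infer_instance
    obtain ⟨q1, hq1, hq10⟩ : ∃ q1 ∈ interior K0, q1 ≠ 0 := by
      have h1 : (nhdsWithin (q0 - p) {q0 - p}ᶜ).NeBot := 
        Module.punctured_nhds_neBot ℂ _ _
      by_cases h : q0 - p = 0
      · have := ((isOpen_interior.eventually_mem hint).filter_mono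
          (nhdsWithin_le_nhds (s := {q0 - p}ᶜ))).and self_mem_nhdsWithin
        obtain ⟨q1, ha, hb⟩ := this.exists
        exact ⟨q1, ha, fun h' => hb (by rw [h, h']; rfl)⟩
      · exact ⟨_, hint, h⟩
    obtain ⟨G, hG, hGpos, hGhom, hGq⟩ := core_s16 hc0 (by simpa [hK0] using hp) w hwc hw hd q1 hq1 hq10
    obtain ⟨φ, hφ⟩ := gram (n := n) (by simp) G hGpos hGhom hGq
    let f : EuclideanSpace ℂ (Fin n) →L[ℂ] ℂ :=
      LinearMap.toContinuousLinearMap (w ∘ₗ φ.symm.toLinearMap)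
    let e' := (InnerProductSpace.toDual ℂ (EuclideanSpace ℂ (Fin n))).symm f
    have he' : ∀ x, w x = inner ℂ e' (φ x) := by
      intro x
      have : inner ℂ e' (φ x) = f (φ x) := InnerProductSpace.toDual_symm_apply
      rw [this]
      simp [f]
    set e := (2⁻¹ : ℂ) • e' with he
    have hKe : ∀ x, x ∈ K0 ↔ ‖φ x - e‖ ≤ ‖e‖ := by
      intro x
      rw [hG, hφ, he', ← sq_le_sq₀ (norm_nonneg _) (norm_nonneg _), norm_sub_sq (𝕜 := ℂ)]
      have h1 : RCLike.re (inner ℂ (φ x) e) = 2⁻¹ * (inner ℂ e' (φ x)).re := by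
        rw [inner_re_symm, he, inner_smul_left]
        have : (starRingEnd ℂ) (2⁻¹ : ℂ) = ((2⁻¹ : ℝ) : ℂ) := by
          rw [show (2⁻¹ : ℂ) = ((2⁻¹ : ℝ) : ℂ) by push_cast; rfl, Complex.conj_ofReal]
        rw [this]
        exact Complex.re_ofReal_mul _ _
      rw [h1]
      constructor <;> intro h <;> linarith
    have hen : 0 < ‖e‖ := by
      by_contra hcon
      have h1 : ‖e‖ = 0 := le_antisymm (not_lt.1 hcon) (norm_nonneg _)
      have h2 := (hKe q1).1 (interior_subset hq1)
      rw [h1] at h2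
      rw [norm_eq_zero.1 h1, sub_zero] at h2
      have := norm_le_zero_iff.1 h2
      exact hq10 (by simpa using this)
    have hec : ((‖e‖ : ℝ) : ℂ) ≠ 0 := by exact_mod_cast hen.ne'
    refine ⟨(LinearEquiv.smulOfNeZero ℂ _ ((‖e‖ : ℝ) : ℂ) hec).trans φ.symm, φ.symm e + p, ?_⟩
    ext x
    have h1 : x ∈ K ↔ x - p ∈ K0 := by rw [hK0, Set.mem_preimage, sub_add_cancel]
    rw [h1, hKe]
    constructor
    · intro h
      refine ⟨((‖e‖ : ℝ) : ℂ)⁻¹ • (φ (x - p) - e), ?_, ?_⟩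
      · rw [mem_closedBall_zero_iff, norm_smul, norm_inv, Complex.norm_real, norm_norm,
          inv_mul_le_iff₀ hen]
        simpa using h
      · simp only [LinearEquiv.trans_apply, LinearEquiv.smulOfNeZero_apply]
        rw [smul_smul, mul_inv_cancel₀ hec, one_smul, map_sub, LinearEquiv.symm_apply_apply]
        abel
    · rintro ⟨y, hy, rfl⟩
      simp only [LinearEquiv.trans_apply, LinearEquiv.smulOfNeZero_apply]
      rw [← add_assoc, add_sub_cancel_right, map_add, LinearEquiv.apply_symm_apply,
        LinearEquiv.apply_symm_apply, add_sub_cancel_right, norm_smul, Complex.norm_real,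
        norm_norm]
      rw [mem_closedBall_zero_iff] at hy
      nlinarith
end
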